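/- (Proposition 1.2) Assume the quenched kernels Q_ω are strongly irreducible uniformly in ω: there exist ε > 0 and N ∈ ℕ such that for all x ∈ ℤ^d, all ω ∈ Ω and all e ∈ ℤ^d with ‖e‖₂ = 1, one has Q_ω^n(x,x+e) ≥ ε for some n ≤ N. Then there exists a constant C₀ > 0, not depending on ω, such that for all ω ∈ Ω, all n ≥ 1 and all x,y ∈ ℤ^d, Q_ω^n(x,y) ≤ C₀ n^{−d/2} exp(−‖y−x‖₂²/(C₀ n)). -/

import Mathlib

open scoped Classical

noncomputable section

/-- Points of `ℤ^d`. -/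
abbrev Zd (d : ℕ) := Fin d → ℤ

/-- Euclidean norm on `ℤ^d`. -/
def eucNorm {d : ℕ} (v : Zd d) : ℝ := Real.sqrt (∑ i, ((v i : ℝ)) ^ 2)

/-- `M(ω) = Σ_i Σ_x W_i(T_x ω) · 1{0 ∈ C_i + x}`, where the `i`-th cycle is
`C_i = (z i 0, …, z i (n i))`. -/
def Mfun {d K : ℕ} {Ω : Type*} (n : Fin K → ℕ) (z : Fin K → ℕ → Zd d)
    (T : Zd d → Ω → Ω) (W : Fin K → Ω → ℝ) (ω : Ω) : ℝ :=
  ∑ i : Fin K, ∑' x : Zd d, if ∃ j < n i, z i j + x = 0 then W i (T x ω) else 0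

/-- `p_v(ω) = M(ω)⁻¹ Σ_i Σ_x W_i(T_x ω) · 1{(0,v) ∈ C_i + x}`. -/
def pfun {d K : ℕ} {Ω : Type*} (n : Fin K → ℕ) (z : Fin K → ℕ → Zd d)
    (T : Zd d → Ω → Ω) (W : Fin K → Ω → ℝ) (ω : Ω) (v : Zd d) : ℝ :=
  (Mfun n z T W ω)⁻¹ *
    ∑ i : Fin K, ∑' x : Zd d,
      if ∃ j, 1 ≤ j ∧ j ≤ n i ∧ z i (j - 1) + x = 0 ∧ z i j + x = v then W i (T x ω) else 0

/-- `Λ`, the (finite) set of possible jumps. -/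
def Lam {d K : ℕ} (n : Fin K → ℕ) (z : Fin K → ℕ → Zd d) : Finset (Zd d) :=
  Finset.univ.biUnion fun i => (Finset.range (n i)).image fun j => z i (j + 1) - z i j

/-- The quenched transition kernel `Q_ω(x,y) = p_{y-x}(T_x ω)`. -/
def Qker {d K : ℕ} {Ω : Type*} (n : Fin K → ℕ) (z : Fin K → ℕ → Zd d)
    (T : Zd d → Ω → Ω) (W : Fin K → Ω → ℝ) (ω : Ω) (x y : Zd d) : ℝ :=
  pfun n z T W (T x ω) (y - x)

/-- `n`-fold composition of a transition kernel. -/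
def kerpow {d : ℕ} (Q : Zd d → Zd d → ℝ) : ℕ → Zd d → Zd d → ℝ
  | 0 => fun x y => if x = y then 1 else 0
  | m + 1 => fun x y => ∑' zz : Zd d, kerpow Q m x zz * Q zz y

/-- The total flow out of `x` of a flow `b` on `ℤ^d`, where `b x v` is the flow from `x` to `x + v`
and all jumps `v` lie in `V`. -/
def outflow {d : ℕ} (V : Finset (Zd d)) (b : Zd d → Zd d → ℝ) (x : Zd d) : ℝ := ∑ v ∈ V, b x v

/-- A nonnegative flow for which the inflow equals the outflow at every point. -/
structure BalancedFlow {d : ℕ} (V : Finset (Zd d)) (b : Zd d → Zd d → ℝ) : Prop where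
  nonneg : ∀ x v, 0 ≤ b x v
  balanced : ∀ y, ∑ v ∈ V, b (y - v) v = outflow V b y

/-- The Markov operator of the random walk with jump rates proportional to the flow `b`. -/
def walkOp {d : ℕ} (V : Finset (Zd d)) (b : Zd d → Zd d → ℝ) : Module.End ℝ (Zd d → ℝ) where
  toFun f x := (∑ v ∈ V, b x v * f (x + v)) / outflow V b x
  map_add' f g := by
    funext x
    simp [mul_add, Finset.sum_add_distrib, add_div]
  map_smul' r f := by
    funext x
    simp only [Pi.smul_apply, smul_eq_mul, RingHom.id_apply, mul_div_assoc', Finset.mul_sum]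
    congr 1
    exact Finset.sum_congr rfl fun v _ => by ring

/-- Integration against the measure `outflow V b`. -/
def flowSum {d : ℕ} (V : Finset (Zd d)) (b : Zd d → Zd d → ℝ) (h : Zd d → ℝ) : ℝ :=
  ∑' x, outflow V b x * h x

/-- The indicator function of a point. -/
def pt {d : ℕ} (y : Zd d) : Zd d → ℝ := fun x => if x = y then 1 else 0

/-- A balanced flow with outflow in `[c, C]`, which can be tilted by exponentials of the coordinates
at the cost of a factor `exp (B * |t|)`, and whose walk is uniformly irreducible. -/
structure EllipticFlow {d : ℕ} (V : Finset (Zd d)) (B c C ε : ℝ) (N : ℕ)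
    (b : Zd d → Zd d → ℝ) : Prop extends BalancedFlow V b where
  le_outflow : ∀ x, c ≤ outflow V b x
  outflow_le : ∀ x, outflow V b x ≤ C
  tilt : ∀ (i : Fin d) (t : ℝ), ∃ b', BalancedFlow V b' ∧ ∀ x, ∀ v ∈ V,
    Real.exp (t * x i - B * |t|) * b x v ≤ b' x v ∧
      b' x v ≤ Real.exp (t * x i + B * |t|) * b x v
  irred : ∀ (x : Zd d) (i : Fin d) (s : ℤ), |s| = 1 →
    ∃ m ≤ N, ε ≤ (walkOp V b ^ m) (pt (x + Pi.single i s)) x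

section FiniteSupport

variable {d : ℕ}

theorem finite_support_of_zero {α : Type*} {f g : α → ℝ} (hf : f.support.Finite)
    (h : ∀ x, f x = 0 → g x = 0) : g.support.Finite :=
  hf.subset fun x hx hfx => hx (h x hfx)

theorem summable_of_zero {α : Type*} {f g : α → ℝ} (hf : f.support.Finite)
    (h : ∀ x, f x = 0 → g x = 0) : Summable g :=
  summable_of_hasFiniteSupport (finite_support_of_zero hf h)

theorem finite_support_shift {f : Zd d → ℝ} (hf : f.support.Finite) (v : Zd d) :
    (fun x => f (x + v)).support.Finite :=
  hf.preimage (f := fun x => x + v) (add_left_injective v).injOn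

theorem finite_support_pt (y : Zd d) : (pt y).support.Finite :=
  (Set.finite_singleton y).subset fun x hx => by
    by_contra h
    exact hx (if_neg h)

theorem tsum_shift (f : Zd d → ℝ) (v : Zd d) : ∑' x, f (x + v) = ∑' x, f x :=
  (Equiv.addRight v).tsum_eq f

end FiniteSupport

section Walk

variable {d : ℕ} {V : Finset (Zd d)} {b : Zd d → Zd d → ℝ}

theorem walkOp_apply (f : Zd d → ℝ) (x : Zd d) :
    walkOp V b f x = (∑ v ∈ V, b x v * f (x + v)) / outflow V b x := rfl

theorem pow_succ_walkOp_apply (m : ℕ) (f : Zd d → ℝ) :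
    (walkOp V b ^ (m + 1)) f = walkOp V b ((walkOp V b ^ m) f) := by
  rw [pow_succ']; rfl

theorem pow_add_walkOp_apply (m k : ℕ) (f : Zd d → ℝ) :
    (walkOp V b ^ (m + k)) f = (walkOp V b ^ m) ((walkOp V b ^ k) f) := by
  rw [pow_add]; rfl

theorem finite_support_walkOp {f : Zd d → ℝ} (hf : f.support.Finite) :
    (walkOp V b f).support.Finite := by
  refine (V.finite_toSet.biUnion fun v _ => finite_support_shift hf v).subset fun x hx => ?_
  by_contra h
  simp only [Set.mem_iUnion, not_exists, Function.mem_support, not_not] at h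
  refine hx ?_
  rw [walkOp_apply, Finset.sum_eq_zero, zero_div]
  intro v hv
  rw [h v hv, mul_zero]

theorem finite_support_pow_walkOp {f : Zd d → ℝ} (hf : f.support.Finite) (m : ℕ) :
    ((walkOp V b ^ m) f).support.Finite := by
  induction m with
  | zero => simpa using hf
  | succ m ih => rw [pow_succ_walkOp_apply]; exact finite_support_walkOp ih

theorem BalancedFlow.outflow_nonneg (hb : BalancedFlow V b) (x : Zd d) : 0 ≤ outflow V b x :=
  Finset.sum_nonneg fun v _ => hb.nonneg x v

theorem BalancedFlow.walkOp_mono (hb : BalancedFlow V b) {f g : Zd d → ℝ} (h : f ≤ g) :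
    walkOp V b f ≤ walkOp V b g := fun x =>
  div_le_div_of_nonneg_right
    (Finset.sum_le_sum fun v _ => mul_le_mul_of_nonneg_left (h _) (hb.nonneg x v))
    (hb.outflow_nonneg x)

theorem BalancedFlow.pow_walkOp_mono (hb : BalancedFlow V b) {f g : Zd d → ℝ} (h : f ≤ g) (m : ℕ) :
    (walkOp V b ^ m) f ≤ (walkOp V b ^ m) g := by
  induction m with
  | zero => simpa using h
  | succ m ih => simpa only [pow_succ_walkOp_apply] using hb.walkOp_mono ih

theorem BalancedFlow.pow_walkOp_nonneg (hb : BalancedFlow V b) {f : Zd d → ℝ} (h : 0 ≤ f) (m : ℕ) :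
    0 ≤ (walkOp V b ^ m) f := by
  simpa using hb.pow_walkOp_mono h m

theorem pow_walkOp_one (h0 : ∀ x, 0 < outflow V b x) (m : ℕ) : (walkOp V b ^ m) 1 = 1 := by
  induction m with
  | zero => rfl
  | succ m ih =>
    rw [pow_succ_walkOp_apply, ih]
    funext x
    simp only [walkOp_apply, Pi.one_apply, mul_one]
    exact div_self (h0 x).ne'

theorem pt_nonneg (y : Zd d) : 0 ≤ pt y := fun x => by
  simp only [pt, Pi.zero_apply]; split_ifs <;> norm_num

theorem pt_le_one (y : Zd d) : pt y ≤ 1 := fun x => by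
  simp only [pt, Pi.one_apply]; split_ifs <;> norm_num

theorem pt_self (y : Zd d) : pt y y = 1 := if_pos rfl

theorem smul_pt_le {h : Zd d → ℝ} (hh : 0 ≤ h) (y : Zd d) : h y • pt y ≤ h := fun x => by
  simp only [pt, Pi.smul_apply, smul_eq_mul]
  split_ifs with hx
  · simp [hx]
  · simpa using hh x

theorem BalancedFlow.tsum_flow_mul (hb : BalancedFlow V b) {h : Zd d → ℝ}
    (hh : h.support.Finite) :
    ∑' x, ∑ v ∈ V, b x v * h (x + v) = flowSum V b h := by
  rw [Summable.tsum_finsetSum fun v _ => summable_of_zero (finite_support_shift hh v)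
    fun x hx => by rw [hx, mul_zero]]
  have key : ∀ v, ∑' x, b x v * h (x + v) = ∑' y, b (y - v) v * h y := fun v => by
    rw [← tsum_shift (fun y => b (y - v) v * h y) v]
    simp
  simp only [key, flowSum]
  rw [← Summable.tsum_finsetSum fun v _ => summable_of_zero hh fun x hx => by rw [hx, mul_zero]]
  simp only [← Finset.sum_mul, hb.balanced]

theorem outflow_mul_walkOp (h0 : ∀ x, 0 < outflow V b x) (h : Zd d → ℝ) (x : Zd d) :
    outflow V b x * walkOp V b h x = ∑ v ∈ V, b x v * h (x + v) := by
  rw [walkOp_apply, mul_div_cancel₀ _ (h0 x).ne']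

theorem BalancedFlow.flowSum_walkOp (hb : BalancedFlow V b) (h0 : ∀ x, 0 < outflow V b x)
    {h : Zd d → ℝ} (hh : h.support.Finite) : flowSum V b (walkOp V b h) = flowSum V b h := by
  rw [← hb.tsum_flow_mul hh, flowSum]
  simp only [outflow_mul_walkOp h0]

theorem BalancedFlow.flowSum_pow_walkOp (hb : BalancedFlow V b) (h0 : ∀ x, 0 < outflow V b x)
    {h : Zd d → ℝ} (hh : h.support.Finite) (m : ℕ) :
    flowSum V b ((walkOp V b ^ m) h) = flowSum V b h := by
  induction m with
  | zero => rfl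
  | succ m ih =>
    rw [pow_succ_walkOp_apply, hb.flowSum_walkOp h0 (finite_support_pow_walkOp hh m), ih]

theorem flowSum_pt (y : Zd d) (h : Zd d → ℝ) :
    flowSum V b (fun x => pt y x * h x) = outflow V b y * h y := by
  rw [flowSum, tsum_eq_single y]
  · rw [pt_self, one_mul]
  · intro x hx
    simp [pt, hx]

/-- The conditional variance of `h` after `m` steps dominates the contribution of a single point. -/
theorem BalancedFlow.variance_ge (hb : BalancedFlow V b) (h0 : ∀ x, 0 < outflow V b x)
    (h : Zd d → ℝ) (m : ℕ) (x y : Zd d) :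
    (walkOp V b ^ m) (pt y) x * ((walkOp V b ^ m) h x - h y) ^ 2 ≤
      (walkOp V b ^ m) (h ^ 2) x - (walkOp V b ^ m) h x ^ 2 := by
  set t := (walkOp V b ^ m) h x with ht
  have hle : (h y - t) ^ 2 • pt y ≤ h ^ 2 - (2 * t) • h + (t ^ 2) • (1 : Zd d → ℝ) := by
    convert smul_pt_le (h := fun z => (h z - t) ^ 2) (fun z => sq_nonneg _) y using 1
    funext z
    simp only [Pi.add_apply, Pi.sub_apply, Pi.pow_apply, Pi.smul_apply, smul_eq_mul, Pi.one_apply]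
    ring
  have := hb.pow_walkOp_mono hle m x
  simp only [map_add, map_sub, map_smul, pow_walkOp_one h0, Pi.add_apply, Pi.sub_apply,
    Pi.smul_apply, smul_eq_mul, Pi.one_apply, ← ht] at this
  nlinarith [this]

theorem BalancedFlow.sq_pow_walkOp_le (hb : BalancedFlow V b) (h0 : ∀ x, 0 < outflow V b x)
    (h : Zd d → ℝ) (m : ℕ) (x : Zd d) :
    (walkOp V b ^ m) h x ^ 2 ≤ (walkOp V b ^ m) (h ^ 2) x := by
  have := hb.variance_ge h0 h m x x
  have h1 := mul_nonneg (hb.pow_walkOp_nonneg (pt_nonneg x) m x)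
    (sq_nonneg ((walkOp V b ^ m) h x - h x))
  linarith

theorem BalancedFlow.pow_walkOp_pt_mul_le (hb : BalancedFlow V b) (m k : ℕ) (x y w : Zd d) :
    (walkOp V b ^ m) (pt y) x * (walkOp V b ^ k) (pt w) y ≤ (walkOp V b ^ (m + k)) (pt w) x := by
  have := hb.pow_walkOp_mono (smul_pt_le (hb.pow_walkOp_nonneg (pt_nonneg w) k) y) m x
  rw [map_smul, Pi.smul_apply, smul_eq_mul, ← pow_add_walkOp_apply] at this
  linarith

theorem BalancedFlow.pow_walkOp_pt_le_one (hb : BalancedFlow V b) (h0 : ∀ x, 0 < outflow V b x)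
    (m : ℕ) (x y : Zd d) : (walkOp V b ^ m) (pt y) x ≤ 1 := by
  simpa [pow_walkOp_one h0] using hb.pow_walkOp_mono (pt_le_one y) m x

theorem summable_flowSum {h : Zd d → ℝ} (hh : h.support.Finite) :
    Summable fun x => outflow V b x * h x :=
  summable_of_zero hh fun x hx => by rw [hx, mul_zero]

theorem BalancedFlow.flowSum_mono (hb : BalancedFlow V b) {g h : Zd d → ℝ}
    (hg : g.support.Finite) (hh : h.support.Finite) (hgh : g ≤ h) :
    flowSum V b g ≤ flowSum V b h :=
  (summable_flowSum hg).tsum_le_tsum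
    (fun x => mul_le_mul_of_nonneg_left (hgh x) (hb.outflow_nonneg x)) (summable_flowSum hh)

theorem BalancedFlow.flowSum_nonneg (hb : BalancedFlow V b) {h : Zd d → ℝ} (hh : 0 ≤ h) :
    0 ≤ flowSum V b h :=
  tsum_nonneg fun x => mul_nonneg (hb.outflow_nonneg x) (hh x)

theorem finite_support_sq {f : Zd d → ℝ} (hf : f.support.Finite) : (f ^ 2).support.Finite :=
  finite_support_of_zero hf fun x hx => by simp [hx]

theorem flowSum_add {g h : Zd d → ℝ} (hg : g.support.Finite) (hh : h.support.Finite) :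
    flowSum V b (g + h) = flowSum V b g + flowSum V b h := by
  simp only [flowSum, Pi.add_apply, mul_add]
  exact (summable_flowSum hg).tsum_add (summable_flowSum hh)

theorem flowSum_smul (r : ℝ) (h : Zd d → ℝ) : flowSum V b (r • h) = r * flowSum V b h := by
  simp only [flowSum, Pi.smul_apply, smul_eq_mul, ← tsum_mul_left]
  exact tsum_congr fun x => by ring

theorem flowSum_sub {g h : Zd d → ℝ} (hg : g.support.Finite) (hh : h.support.Finite) :
    flowSum V b (g - h) = flowSum V b g - flowSum V b h := by
  simp only [flowSum, Pi.sub_apply, mul_sub]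
  exact (summable_flowSum hg).tsum_sub (summable_flowSum hh)

theorem flowSum_sum {ι : Type*} (s : Finset ι) {g : ι → Zd d → ℝ}
    (hg : ∀ i ∈ s, (g i).support.Finite) :
    flowSum V b (∑ i ∈ s, g i) = ∑ i ∈ s, flowSum V b (g i) := by
  simp only [flowSum, Finset.sum_apply, Finset.mul_sum]
  exact Summable.tsum_finsetSum fun i hi => summable_flowSum (hg i hi)

/-- The `L²` norm decreases along the walk. -/
theorem BalancedFlow.flowSum_sq_antitone (hb : BalancedFlow V b) (h0 : ∀ x, 0 < outflow V b x)
    {f : Zd d → ℝ} (hf : f.support.Finite) :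
    Antitone fun m => flowSum V b (((walkOp V b ^ m) f) ^ 2) := by
  refine antitone_nat_of_succ_le fun m => ?_
  have hm : ((walkOp V b ^ m) f).support.Finite := finite_support_pow_walkOp hf m
  calc flowSum V b (((walkOp V b ^ (m + 1)) f) ^ 2)
      ≤ flowSum V b (walkOp V b (((walkOp V b ^ m) f) ^ 2)) := by
        refine hb.flowSum_mono (finite_support_sq (finite_support_pow_walkOp hf _))
          (finite_support_walkOp (finite_support_sq hm)) fun x => ?_
        rw [pow_succ_walkOp_apply]
        simpa using hb.sq_pow_walkOp_le h0 ((walkOp V b ^ m) f) 1 x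
    _ = _ := hb.flowSum_walkOp h0 (finite_support_sq hm)

end Walk

section Nash

variable {d : ℕ} {f : Zd d → ℝ}

/-- The squared `ℓ²` distance between `f` and its translate by `v`. -/
def shiftEnergy (f : Zd d → ℝ) (v : Zd d) : ℝ := ∑' x, (f x - f (x + v)) ^ 2

theorem finite_support_sub_shift (hf : f.support.Finite) (u v : Zd d) :
    (fun x => f (x + u) - f (x + v)).support.Finite :=
  ((finite_support_shift hf u).union (finite_support_shift hf v)).subset
    (Function.support_sub _ _)

theorem summable_sq_sub_shift (hf : f.support.Finite) (u v : Zd d) :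
    Summable fun x => (f (x + u) - f (x + v)) ^ 2 :=
  summable_of_zero (finite_support_sub_shift hf u v) fun x hx => by simp [hx]

theorem shiftEnergy_add_le (hf : f.support.Finite) (u w : Zd d) {t : ℝ} (ht : 0 < t) :
    shiftEnergy f (u + w) ≤ (1 + t⁻¹) * shiftEnergy f u + (1 + t) * shiftEnergy f w := by
  have h1 : shiftEnergy f w = ∑' x, (f (x + u) - f (x + (u + w))) ^ 2 := by
    rw [shiftEnergy, ← tsum_shift _ u]
    simp only [add_assoc]
  have s1 : Summable fun x => (f x - f (x + u)) ^ 2 := by simpa using summable_sq_sub_shift hf 0 u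
  have s2 := summable_sq_sub_shift hf u (u + w)
  have s3 : Summable fun x => (f x - f (x + (u + w))) ^ 2 := by
    simpa using summable_sq_sub_shift hf 0 (u + w)
  rw [h1, shiftEnergy, shiftEnergy, ← tsum_mul_left, ← tsum_mul_left,
    ← (s1.mul_left _).tsum_add (s2.mul_left _)]
  refine s3.tsum_le_tsum (fun x => ?_) ((s1.mul_left _).add (s2.mul_left _))
  set p := f x - f (x + u)
  set q := f (x + u) - f (x + (u + w))
  have hpq : f x - f (x + (u + w)) = p + q := by ring
  rw [hpq]
  have h2 : 0 ≤ t⁻¹ * (p - t * q) ^ 2 := by positivity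
  have h3 : t⁻¹ * (p - t * q) ^ 2 = t⁻¹ * p ^ 2 - 2 * p * q + t * q ^ 2 := by
    field_simp
    ring
  nlinarith

theorem shiftEnergy_le (hf : f.support.Finite) {E : ℝ}
    (hE : ∀ i, shiftEnergy f (Pi.single i 1) ≤ E) (n : ℕ) (v : Zd d) (hv : 0 ≤ v)
    (hn : ∑ i, v i = n) : shiftEnergy f v ≤ (n : ℝ) ^ 2 * E := by
  induction n generalizing v with
  | zero =>
    have h0 : v = 0 := by
      funext i
      have := (Finset.sum_eq_zero_iff_of_nonneg fun i _ => hv i).1 (by simpa using hn) i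
        (Finset.mem_univ i)
      simpa using this
    simp [shiftEnergy, h0]
  | succ n ih =>
    obtain ⟨i, hi⟩ : ∃ i, 0 < v i := by
      by_contra! h
      have := Finset.sum_nonpos fun i (_ : i ∈ Finset.univ) => h i
      rw [hn] at this
      push_cast at this
      linarith
    set u : Zd d := v - Pi.single i 1 with hu
    have huv : v = u + Pi.single i 1 := by simp [hu]
    have hu0 : 0 ≤ u := fun j => by
      by_cases hj : j = i
      · subst hj
        simp only [hu, Pi.zero_apply, Pi.sub_apply, Pi.single_eq_same]
        omega
      · simpa [hu, Pi.single_eq_of_ne hj] using hv j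
    have hun : ∑ j, u j = n := by
      simp only [hu, Pi.sub_apply, Finset.sum_sub_distrib, hn, Finset.sum_pi_single',
        Finset.mem_univ, if_true]
      push_cast
      ring
    have hSu := ih u hu0 hun
    rcases Nat.eq_zero_or_pos n with rfl | hnpos
    · have hu' : u = 0 := by
        funext j
        have := (Finset.sum_eq_zero_iff_of_nonneg fun j _ => hu0 j).1 (by simpa using hun) j
          (Finset.mem_univ j)
        simpa using this
      rw [huv, hu']
      simpa using hE i
    · have hn' : (0 : ℝ) < n := by exact_mod_cast hnpos
      rw [huv]
      calc _ ≤ _ := shiftEnergy_add_le hf u (Pi.single i 1) hn'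
        _ ≤ (1 + (n : ℝ)⁻¹) * ((n : ℝ) ^ 2 * E) + (1 + n) * E := by
          gcongr
          exact hE i
        _ = _ := by
          push_cast
          field_simp
          ring

theorem tsum_sq_eq (hf : f.support.Finite) (v : Zd d) :
    ∑' x, f x ^ 2 = shiftEnergy f v / 2 + ∑' x, f x * f (x + v) := by
  have s1 : Summable fun x => f x ^ 2 := summable_of_zero hf fun x hx => by simp [hx]
  have s2 : Summable fun x => f (x + v) ^ 2 :=
    summable_of_zero (finite_support_shift hf v) fun x hx => by simp [hx]
  have s3 : Summable fun x => f x * f (x + v) := summable_of_zero hf fun x hx => by simp [hx]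
  have h : shiftEnergy f v = ∑' x, f x ^ 2 + ∑' x, f (x + v) ^ 2 - 2 * ∑' x, f x * f (x + v) := by
    rw [← tsum_mul_left, ← s1.tsum_add s2, ← (s1.add s2).tsum_sub (s3.mul_left 2), shiftEnergy]
    exact tsum_congr fun x => by ring
  rw [h, tsum_shift (fun x => f x ^ 2) v]
  ring

/-- A Nash-type inequality on `ℤ^d`, at the scale `r`. -/
theorem tsum_sq_le_of_shiftEnergy_le (hf : f.support.Finite) (hf0 : 0 ≤ f) {E : ℝ}
    (hE : ∀ i, shiftEnergy f (Pi.single i 1) ≤ E) (hE0 : 0 ≤ E) {r : ℕ} (hr : 1 ≤ r) :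
    ∑' x, f x ^ 2 ≤ ((d : ℝ) * r) ^ 2 / 2 * E + ((r : ℝ) ^ d)⁻¹ * (∑' x, f x) ^ 2 := by
  set box : Finset (Zd d) := Fintype.piFinset fun _ => Finset.Ico (0 : ℤ) r with hbox
  have hcard : (box.card : ℝ) = (r : ℝ) ^ d := by simp [hbox]
  have hrd : (0 : ℝ) < (r : ℝ) ^ d := by positivity
  have sf : Summable f := summable_of_zero hf fun x hx => hx
  have hS : ∀ v ∈ box, shiftEnergy f v ≤ ((d : ℝ) * r) ^ 2 * E := fun v hv => by
    have hv' : ∀ i, 0 ≤ v i ∧ v i < r := fun i => by simpa using Fintype.mem_piFinset.1 hv i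
    have hnn : 0 ≤ ∑ i, v i := Finset.sum_nonneg fun i _ => (hv' i).1
    have hle : ∑ i, v i ≤ d * r := by
      calc ∑ i, v i ≤ ∑ _i : Fin d, (r : ℤ) := Finset.sum_le_sum fun i _ => (hv' i).2.le
        _ = d * r := by simp
    refine (shiftEnergy_le hf hE (∑ i, v i).toNat v (fun i => (hv' i).1)
      (Int.toNat_of_nonneg hnn).symm).trans ?_
    gcongr
    have : (((∑ i, v i).toNat : ℤ) : ℝ) ≤ ((d * r : ℤ) : ℝ) := by
      rw [Int.toNat_of_nonneg hnn]
      exact_mod_cast hle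
    exact_mod_cast this
  have hcorr : ∑ v ∈ box, ∑' x, f x * f (x + v) ≤ (∑' x, f x) ^ 2 := by
    have s3 : ∀ v ∈ box, Summable fun x => f x * f (x + v) :=
      fun v _ => summable_of_zero hf fun x hx => by simp [hx]
    rw [← Summable.tsum_finsetSum s3, sq, ← tsum_mul_right]
    refine (summable_sum s3).tsum_le_tsum (fun x => ?_) (sf.mul_right _)
    rw [← Finset.mul_sum]
    refine mul_le_mul_of_nonneg_left ?_ (hf0 x)
    have := Summable.sum_le_tsum box (fun v _ => hf0 (v + x))
      (summable_of_zero (finite_support_shift hf x) fun _ h => h)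
    rw [tsum_shift] at this
    simpa only [add_comm x] using this
  have hsum : (r : ℝ) ^ d * ∑' x, f x ^ 2 ≤
      (r : ℝ) ^ d * (((d : ℝ) * r) ^ 2 / 2 * E) + (∑' x, f x) ^ 2 := by
    calc (r : ℝ) ^ d * ∑' x, f x ^ 2 = ∑ v ∈ box, ∑' x, f x ^ 2 := by
          rw [Finset.sum_const, nsmul_eq_mul, hcard]
      _ = ∑ v ∈ box, shiftEnergy f v / 2 + ∑ v ∈ box, ∑' x, f x * f (x + v) := by
          rw [← Finset.sum_add_distrib]
          exact Finset.sum_congr rfl fun v _ => tsum_sq_eq hf v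
      _ ≤ ∑ _v ∈ box, ((d : ℝ) * r) ^ 2 / 2 * E + (∑' x, f x) ^ 2 := by
          refine add_le_add (Finset.sum_le_sum fun v hv => ?_) hcorr
          linarith [hS v hv]
      _ = _ := by rw [Finset.sum_const, nsmul_eq_mul, hcard]
  refine le_of_mul_le_mul_left (hsum.trans (le_of_eq ?_)) hrd
  field_simp

end Nash

section OnDiagonal

variable {d : ℕ} {V : Finset (Zd d)} {b : Zd d → Zd d → ℝ} {B c C ε : ℝ} {N : ℕ}

theorem EllipticFlow.outflow_pos (hb : EllipticFlow V B c C ε N b) (hc : 0 < c) (x : Zd d) :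
    0 < outflow V b x := hc.trans_le (hb.le_outflow x)

theorem EllipticFlow.le_one (hb : EllipticFlow V B c C ε N b) (hc : 0 < c) (hd : 0 < d) :
    ε ≤ 1 := by
  obtain ⟨m, -, hm⟩ := hb.irred 0 ⟨0, hd⟩ 1 (by simp)
  exact hm.trans (hb.pow_walkOp_pt_le_one (hb.outflow_pos hc) _ _ _)

theorem BalancedFlow.pow_le_return (hb : BalancedFlow V b) {q : ℕ} {x : Zd d} {δ : ℝ} (hδ : 0 ≤ δ)
    (h : δ ≤ (walkOp V b ^ q) (pt x) x) (t : ℕ) :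
    δ ^ t ≤ (walkOp V b ^ (q * t)) (pt x) x := by
  induction t with
  | zero => simp [pt_self]
  | succ t ih =>
    rw [pow_succ, Nat.mul_succ]
    exact (mul_le_mul ih h hδ (le_trans (by positivity) ih)).trans
      (hb.pow_walkOp_pt_mul_le _ _ _ _ _)

/-- There is a common time at which the walk returns to its starting point with probability
bounded below. -/
theorem EllipticFlow.le_return (hb : EllipticFlow V B c C ε N b) (hc : 0 < c) (hε : 0 < ε)
    (hd : 0 < d) (x : Zd d) :
    ε ^ (2 * (2 * N).factorial) ≤ (walkOp V b ^ (2 * N).factorial) (pt x) x := by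
  obtain ⟨m, hmN, hm⟩ := hb.irred x ⟨0, hd⟩ 1 (by simp)
  obtain ⟨k, hkN, hk⟩ := hb.irred (x + Pi.single ⟨0, hd⟩ 1) ⟨0, hd⟩ (-1) (by simp)
  have hxx : x + Pi.single (⟨0, hd⟩ : Fin d) (1 : ℤ) + Pi.single ⟨0, hd⟩ (-1) = x := by
    rw [add_assoc, ← Pi.single_add]
    simp
  rw [hxx] at hk
  have hm0 : 0 < m := by
    rcases Nat.eq_zero_or_pos m with rfl | h
    · have hne : x ≠ x + Pi.single (⟨0, hd⟩ : Fin d) (1 : ℤ) := fun h => by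
        have := congrFun h ⟨0, hd⟩
        simp at this
      simp only [pow_zero, Module.End.one_apply, pt, if_neg hne] at hm
      linarith
    · exact h
  have hret : ε ^ 2 ≤ (walkOp V b ^ (m + k)) (pt x) x := by
    rw [sq]
    exact (mul_le_mul hm hk hε.le (hε.le.trans hm)).trans (hb.pow_walkOp_pt_mul_le _ _ _ _ _)
  obtain ⟨t, ht⟩ : m + k ∣ (2 * N).factorial := Nat.dvd_factorial (by omega) (by omega)
  have htL : t ≤ (2 * N).factorial := by
    rw [ht]
    exact Nat.le_mul_of_pos_left t (by omega)
  calc ε ^ (2 * (2 * N).factorial) ≤ ε ^ (2 * t) :=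
        pow_le_pow_of_le_one hε.le (hb.le_one hc hd) (by omega)
    _ = (ε ^ 2) ^ t := pow_mul ε 2 t
    _ ≤ _ := by
      rw [ht]
      exact hb.pow_le_return (by positivity) hret t

/-- The conditional variance of `(walkOp V b ^ j) f` after `k` steps. -/
def condVar (V : Finset (Zd d)) (b : Zd d → Zd d → ℝ) (f : Zd d → ℝ) (j k : ℕ) : Zd d → ℝ :=
  (walkOp V b ^ k) (((walkOp V b ^ j) f) ^ 2) - ((walkOp V b ^ (j + k)) f) ^ 2

theorem BalancedFlow.le_condVar (hb : BalancedFlow V b) (h0 : ∀ x, 0 < outflow V b x)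
    (f : Zd d → ℝ) (j k : ℕ) (x y : Zd d) {δ : ℝ} (h : δ ≤ (walkOp V b ^ k) (pt y) x) :
    δ * ((walkOp V b ^ (j + k)) f x - (walkOp V b ^ j) f y) ^ 2 ≤ condVar V b f j k x := by
  have h1 := hb.variance_ge h0 ((walkOp V b ^ j) f) k x y
  rw [← pow_add_walkOp_apply, add_comm k j] at h1
  exact (mul_le_mul_of_nonneg_right h (sq_nonneg _)).trans h1

theorem BalancedFlow.condVar_nonneg (hb : BalancedFlow V b) (h0 : ∀ x, 0 < outflow V b x)
    (f : Zd d → ℝ) (j k : ℕ) (x : Zd d) : 0 ≤ condVar V b f j k x := by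
  simpa using hb.le_condVar h0 f j k x x (hb.pow_walkOp_nonneg (pt_nonneg x) k x)

theorem finite_support_condVar {f : Zd d → ℝ} (hf : f.support.Finite) (j k : ℕ) :
    (condVar V b f j k).support.Finite :=
  ((finite_support_pow_walkOp (finite_support_sq (finite_support_pow_walkOp hf j)) k).union
    (finite_support_sq (finite_support_pow_walkOp hf (j + k)))).subset (Function.support_sub _ _)

theorem BalancedFlow.flowSum_condVar (hb : BalancedFlow V b) (h0 : ∀ x, 0 < outflow V b x)
    {f : Zd d → ℝ} (hf : f.support.Finite) (j k : ℕ) :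
    flowSum V b (condVar V b f j k) =
      flowSum V b (((walkOp V b ^ j) f) ^ 2) - flowSum V b (((walkOp V b ^ (j + k)) f) ^ 2) := by
  have hj := finite_support_sq (finite_support_pow_walkOp (V := V) (b := b) hf j)
  rw [condVar, flowSum_sub (finite_support_pow_walkOp hj k)
    (finite_support_sq (finite_support_pow_walkOp hf _)), hb.flowSum_pow_walkOp h0 hj]

/-- The gradient of the time average of the evolution of `f` is controlled by the conditional
variances. -/
theorem EllipticFlow.sq_sub_shift_le (hb : EllipticFlow V B c C ε N b) (hc : 0 < c) {L : ℕ}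
    (hNL : N ≤ L) {δ : ℝ} (hδ : 0 < δ) (hδε : δ ≤ ε)
    (hret : ∀ x, δ ≤ (walkOp V b ^ L) (pt x) x) (f : Zd d → ℝ) (i : Fin d) (x : Zd d) :
    ((∑ j ∈ Finset.range L, (walkOp V b ^ j) f) x -
      (∑ j ∈ Finset.range L, (walkOp V b ^ j) f) (x + Pi.single i 1)) ^ 2 ≤
    4 * L / δ * (∑ j ∈ Finset.range L, ∑ k ∈ Finset.range (L + 1), condVar V b f j k) x := by
  have h0 := hb.outflow_pos hc
  obtain ⟨k, hkN, hk⟩ := hb.irred x i 1 (by simp)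
  have hkL : k ≤ L := hkN.trans hNL
  set F : ℕ → ℝ := fun j => (walkOp V b ^ j) f x
  set G : ℕ → ℝ := fun j => (walkOp V b ^ j) f (x + Pi.single i 1)
  set S : ℕ → ℝ := fun j => ∑ k ∈ Finset.range (L + 1), condVar V b f j k x with hS
  have hcv : ∀ j, ∀ k ≤ L, condVar V b f j k x ≤ S j := fun j k hkL =>
    Finset.single_le_sum (f := fun k => condVar V b f j k x)
      (fun k _ => hb.condVar_nonneg h0 f j k x) (Finset.mem_range.2 (by omega))
  have hFG : ∀ j, (F (j + k) - G j) ^ 2 ≤ δ⁻¹ * S j := fun j => by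
    rw [inv_mul_eq_div, le_div_iff₀ hδ, mul_comm]
    exact (hb.le_condVar h0 f j k x _ (hδε.trans hk)).trans (hcv j k hkL)
  have hFF : ∀ j, (F (j + L) - F j) ^ 2 ≤ δ⁻¹ * S j := fun j => by
    rw [inv_mul_eq_div, le_div_iff₀ hδ, mul_comm]
    exact (hb.le_condVar h0 f j L x _ (hret x)).trans (hcv j L le_rfl)
  have hD1 : (∑ j ∈ Finset.range L, (F (j + k) - G j)) ^ 2 ≤
      L * (δ⁻¹ * ∑ j ∈ Finset.range L, S j) := by
    refine sq_sum_le_card_mul_sum_sq.trans ?_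
    rw [Finset.card_range, Finset.mul_sum (Finset.range L) S]
    gcongr with j
    exact hFG j
  have hD2 : (∑ j ∈ Finset.range k, (F (j + L) - F j)) ^ 2 ≤
      L * (δ⁻¹ * ∑ j ∈ Finset.range L, S j) := by
    refine sq_sum_le_card_mul_sum_sq.trans ?_
    rw [Finset.card_range, Finset.mul_sum (Finset.range L) S]
    gcongr
    calc ∑ j ∈ Finset.range k, (F (j + L) - F j) ^ 2
        ≤ ∑ j ∈ Finset.range L, (F (j + L) - F j) ^ 2 :=
          Finset.sum_le_sum_of_subset_of_nonneg (Finset.range_mono hkL)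
            fun j _ _ => sq_nonneg _
      _ ≤ _ := Finset.sum_le_sum fun j _ => hFF j
  have hid : ∑ j ∈ Finset.range L, F j - ∑ j ∈ Finset.range L, G j =
      ∑ j ∈ Finset.range L, (F (j + k) - G j) - ∑ j ∈ Finset.range k, (F (j + L) - F j) := by
    have e1 := Finset.sum_range_add F L k
    have e2 := Finset.sum_range_add F k L
    rw [add_comm L k, e2] at e1
    simp only [Finset.sum_sub_distrib]
    simp only [add_comm _ k, add_comm _ L]
    linarith
  have hRHS : (∑ j ∈ Finset.range L, ∑ k ∈ Finset.range (L + 1), condVar V b f j k) x =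
      ∑ j ∈ Finset.range L, S j := by
    simp only [Finset.sum_apply, hS]
  rw [hRHS, Finset.sum_apply, Finset.sum_apply, hid]
  calc _ ≤ 2 * (∑ j ∈ Finset.range L, (F (j + k) - G j)) ^ 2 +
        2 * (∑ j ∈ Finset.range k, (F (j + L) - F j)) ^ 2 := by
        nlinarith [sq_nonneg (∑ j ∈ Finset.range L, (F (j + k) - G j) +
          ∑ j ∈ Finset.range k, (F (j + L) - F j))]
    _ ≤ 4 * (L * (δ⁻¹ * ∑ j ∈ Finset.range L, S j)) := by linarith
    _ = _ := by ring

theorem EllipticFlow.flowSum_sq_le (hb : EllipticFlow V B c C ε N b) (hc : 0 < c) {L : ℕ}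
    (hNL : N ≤ L) (hL : 0 < L) {δ : ℝ} (hδ : 0 < δ) (hδε : δ ≤ ε)
    (hret : ∀ x, δ ≤ (walkOp V b ^ L) (pt x) x) {f : Zd d → ℝ} (hf : f.support.Finite)
    (hf0 : 0 ≤ f) {r : ℕ} (hr : 1 ≤ r) :
    flowSum V b (f ^ 2) ≤
      C * ((d : ℝ) ^ 2 / 2 * (4 * L / δ * (L * (L + 1)) / c)) * (r : ℝ) ^ 2 *
        (flowSum V b (f ^ 2) - flowSum V b (((walkOp V b ^ (2 * L)) f) ^ 2)) +
      C * (L / c * flowSum V b f) ^ 2 * ((r : ℝ) ^ d)⁻¹ := by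
  have h0 := hb.outflow_pos hc
  have hC : 0 < C := (h0 0).trans_le (hb.outflow_le 0)
  set A : ℕ → ℝ := fun m => flowSum V b (((walkOp V b ^ m) f) ^ 2) with hA
  have hanti : Antitone A := hb.flowSum_sq_antitone h0 hf
  have hA0 : A 0 = flowSum V b (f ^ 2) := rfl
  set g : Zd d → ℝ := ∑ j ∈ Finset.range L, (walkOp V b ^ j) f with hg
  have hPf : ∀ j, ((walkOp V b ^ j) f).support.Finite := finite_support_pow_walkOp hf
  have hgf : g.support.Finite := by
    refine ((Finset.range L).finite_toSet.biUnion fun j _ => hPf j).subset fun x hx => ?_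
    by_contra h
    simp only [Set.mem_iUnion, not_exists, Function.mem_support, not_not] at h
    refine hx ?_
    rw [hg, Finset.sum_apply]
    exact Finset.sum_eq_zero fun j hj => h j hj
  have hg0 : 0 ≤ g := Finset.sum_nonneg fun j _ => hb.pow_walkOp_nonneg hf0 j
  have hfg : f ≤ g := by
    have := Finset.single_le_sum (f := fun j => (walkOp V b ^ j) f)
      (fun j _ => hb.pow_walkOp_nonneg hf0 j) (Finset.mem_range.2 hL)
    simpa using this
  set D : ℝ := A 0 - A (2 * L) with hD
  have hD0 : 0 ≤ D := sub_nonneg.2 (hanti (Nat.zero_le _))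
  set H : Zd d → ℝ := ∑ j ∈ Finset.range L, ∑ k ∈ Finset.range (L + 1), condVar V b f j k with hH
  have hinner : ∀ j, (∑ k ∈ Finset.range (L + 1), condVar V b f j k).support.Finite := fun j => by
    refine ((Finset.range (L + 1)).finite_toSet.biUnion
      fun k _ => finite_support_condVar (V := V) (b := b) hf j k).subset fun x hx => ?_
    by_contra h
    simp only [Set.mem_iUnion, not_exists, Function.mem_support, not_not] at h
    refine hx ?_
    rw [Finset.sum_apply]
    exact Finset.sum_eq_zero fun k hk => h k hk
  have hHf : H.support.Finite := by
    refine ((Finset.range L).finite_toSet.biUnion fun j _ => hinner j).subset fun x hx => ?_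
    by_contra h
    simp only [Set.mem_iUnion, not_exists, Function.mem_support, not_not] at h
    refine hx ?_
    rw [hH, Finset.sum_apply]
    exact Finset.sum_eq_zero fun j hj => h j hj
  have hHsum : flowSum V b H ≤ L * (L + 1) * D := by
    rw [hH, flowSum_sum _ fun j _ => hinner j]
    calc _ ≤ ∑ j ∈ Finset.range L, ∑ k ∈ Finset.range (L + 1), D := by
          refine Finset.sum_le_sum fun j hj => ?_
          rw [flowSum_sum _ fun k _ => finite_support_condVar hf j k]
          refine Finset.sum_le_sum fun k hk => ?_
          rw [hb.flowSum_condVar h0 hf]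
          have h1 : A j ≤ A 0 := hanti (Nat.zero_le _)
          have h2 : A (2 * L) ≤ A (j + k) := hanti (by
            have := Finset.mem_range.1 hj
            have := Finset.mem_range.1 hk
            omega)
          change A j - A (j + k) ≤ A 0 - A (2 * L)
          linarith
      _ = _ := by
          simp only [Finset.sum_const, Finset.card_range, nsmul_eq_mul]
          push_cast
          ring
  have hE : ∀ i, shiftEnergy g (Pi.single i 1) ≤ 4 * L / δ * (L * (L + 1)) / c * D := fun i => by
    have s1 : Summable fun x => (g x - g (x + Pi.single i 1)) ^ 2 := by
      simpa using summable_sq_sub_shift hgf 0 (Pi.single i 1)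
    have : c * shiftEnergy g (Pi.single i 1) ≤ 4 * L / δ * flowSum V b H := by
      rw [shiftEnergy, flowSum, ← tsum_mul_left, ← tsum_mul_left]
      refine (s1.mul_left c).tsum_le_tsum (fun x => ?_) ((summable_flowSum hHf).mul_left _)
      have h1 := hb.sq_sub_shift_le hc hNL hδ hδε hret f i x
      calc c * (g x - g (x + Pi.single i 1)) ^ 2
          ≤ outflow V b x * (g x - g (x + Pi.single i 1)) ^ 2 := by
            gcongr
            exact hb.le_outflow x
        _ ≤ outflow V b x * (4 * L / δ * H x) := by
            gcongr
            exact (h0 x).le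
        _ = _ := by ring
    have h2 : 4 * L / δ * flowSum V b H ≤ 4 * L / δ * (L * (L + 1) * D) := by gcongr
    have h3 : 4 * L / δ * (L * (L + 1)) / c * D = (4 * L / δ * (L * (L + 1) * D)) / c := by ring
    rw [h3, le_div_iff₀ hc]
    linarith
  have hnash := tsum_sq_le_of_shiftEnergy_le hgf hg0 hE (by positivity) hr
  have hsumg : ∑' x, g x ≤ L / c * flowSum V b f := by
    have h1 : c * ∑' x, g x ≤ flowSum V b g := by
      rw [flowSum, ← tsum_mul_left]
      refine ((summable_of_zero hgf fun x hx => hx).mul_left c).tsum_le_tsum (fun x => ?_)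
        (summable_flowSum hgf)
      exact mul_le_mul_of_nonneg_right (hb.le_outflow x) (hg0 x)
    have h2 : flowSum V b g = L * flowSum V b f := by
      rw [hg, flowSum_sum _ fun j _ => hPf j]
      simp only [hb.flowSum_pow_walkOp h0 hf, Finset.sum_const, Finset.card_range, nsmul_eq_mul]
    rw [div_mul_eq_mul_div, le_div_iff₀ hc]
    linarith
  have hsumg0 : 0 ≤ ∑' x, g x := tsum_nonneg hg0
  have hfC : flowSum V b (f ^ 2) ≤ C * ∑' x, g x ^ 2 := by
    rw [flowSum, ← tsum_mul_left]
    refine (summable_flowSum (finite_support_sq hf)).tsum_le_tsum (fun x => ?_)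
      ((summable_of_zero hgf fun x hx => by simp [hx]).mul_left C)
    have h1 : 0 ≤ f x := hf0 x
    have h2 : f x ≤ g x := hfg x
    rw [Pi.pow_apply]
    gcongr
    exact hb.outflow_le x
  calc flowSum V b (f ^ 2) ≤ C * ∑' x, g x ^ 2 := hfC
    _ ≤ C * (((d : ℝ) * r) ^ 2 / 2 * (4 * L / δ * (L * (L + 1)) / c * D) +
        ((r : ℝ) ^ d)⁻¹ * (L / c * flowSum V b f) ^ 2) := by
      gcongr
      refine hnash.trans ?_
      gcongr
    _ = _ := by
      rw [hD, hA0]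
      ring

end OnDiagonal

section Decay

theorem rpow_neg_half_antitone (d : ℕ) {s t : ℝ} (hs : 0 < s) (hst : s ≤ t) :
    t ^ (-(d : ℝ) / 2) ≤ s ^ (-(d : ℝ) / 2) :=
  Real.rpow_le_rpow_of_nonpos hs hst
    (div_nonpos_of_nonpos_of_nonneg (neg_nonpos.2 d.cast_nonneg) zero_le_two)

theorem sq_rpow_neg_half (d : ℕ) {r : ℝ} (hr : 0 ≤ r) : (r ^ 2) ^ (-(d : ℝ) / 2) = (r ^ d)⁻¹ := by
  rw [← Real.rpow_natCast r 2, ← Real.rpow_mul hr, ← Real.rpow_natCast r d, ← Real.rpow_neg hr]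
  congr 1
  push_cast
  ring

/-- A sequence satisfying the Nash inequality at all scales decays polynomially. -/
theorem decay_of_nash (d : ℕ) {K₀ K₁ K₂ : ℝ} (hK₀ : 0 < K₀) (hK₁ : 1 ≤ K₁) (hK₂ : 0 ≤ K₂) :
    ∃ K₃ > 0, ∀ α : ℕ → ℝ, Antitone α → (∀ k, 0 ≤ α k) → α 0 ≤ K₀ →
      (∀ k, ∀ r : ℕ, 1 ≤ r →
        α k ≤ K₁ * (r : ℝ) ^ 2 * (α k - α (k + 1)) + K₂ * ((r : ℝ) ^ d)⁻¹) →
      ∀ n : ℕ, 1 ≤ n → α n ≤ K₃ * (n : ℝ) ^ (-(d : ℝ) / 2) := by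
  set p : ℝ := -(d : ℝ) / 2 with hp
  set Θ : ℝ := (3⁻¹ : ℝ) ^ p with hΘ
  have hΘ1 : 1 ≤ Θ := by
    have := rpow_neg_half_antitone d (s := 3⁻¹) (t := 1) (by norm_num) (by norm_num)
    rwa [Real.one_rpow] at this
  set η : ℝ := (16 * K₁ * Θ)⁻¹ with hη
  have hη0 : 0 < η := by positivity
  have hη1 : η ≤ 16⁻¹ := by
    rw [hη]
    refine inv_anti₀ (by norm_num) ?_
    nlinarith
  refine ⟨(K₀ + 2 * K₂) * η ^ p, by positivity, ?_⟩
  intro α hα hα0 hαK hnash n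
  induction n using Nat.strong_induction_on with
  | _ n ih =>
    intro hn
    have hn0 : (0 : ℝ) < n := by exact_mod_cast hn
    set K₃ : ℝ := (K₀ + 2 * K₂) * η ^ p with hK₃
    have hK₃0 : 0 ≤ K₃ := by positivity
    have hmul : (η * n) ^ p = η ^ p * (n : ℝ) ^ p := Real.mul_rpow hη0.le hn0.le
    by_cases hηn : η * n < 1
    · have h1 : 1 ≤ (η * n) ^ p := by
        have := rpow_neg_half_antitone d (mul_pos hη0 hn0) hηn.le
        rwa [Real.one_rpow] at this
      calc α n ≤ K₀ := (hα (Nat.zero_le n)).trans hαK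
        _ ≤ (K₀ + 2 * K₂) * (η * n) ^ p := by nlinarith
        _ = _ := by rw [hmul, hK₃]; ring
    · push Not at hηn
      have hn16 : (16 : ℝ) ≤ n := by nlinarith
      have hn16' : 16 ≤ n := by exact_mod_cast hn16
      obtain ⟨k, t, hk1, hkn, hnt, htn, hkt⟩ :
          ∃ k t : ℕ, 1 ≤ k ∧ k < n ∧ n ≤ 2 * t ∧ n ≤ 3 * k ∧ k + t = n :=
        ⟨n / 2, n - n / 2, by omega, by omega, by omega, by omega, by omega⟩
      set r : ℕ := ⌈√(η * n)⌉₊ with hr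
      have hsq1 : 1 ≤ √(η * n) := Real.one_le_sqrt.2 hηn
      have hr1 : √(η * n) ≤ r := Nat.le_ceil _
      have hr2 : (r : ℝ) ≤ 2 * √(η * n) := by
        have := (Nat.ceil_lt_add_one (Real.sqrt_nonneg (η * n))).le
        linarith
      have hrN : 1 ≤ r := by
        have : (1 : ℝ) ≤ r := hsq1.trans hr1
        exact_mod_cast this
      have hsqs : √(η * n) ^ 2 = η * n := Real.sq_sqrt (by positivity)
      have hrsq : (r : ℝ) ^ 2 ≤ 4 * (η * n) := by nlinarith [Real.sqrt_nonneg (η * n)]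
      have hrd : ((r : ℝ) ^ d)⁻¹ ≤ (η * n) ^ p := by
        rw [← sq_rpow_neg_half d (Nat.cast_nonneg r)]
        refine rpow_neg_half_antitone d (by positivity) ?_
        rw [← hsqs]
        gcongr
      have hsum : ∀ t : ℕ, t * α (k + t) ≤
          K₁ * (r : ℝ) ^ 2 * (α k - α (k + t)) + t * (K₂ * ((r : ℝ) ^ d)⁻¹) := by
        intro t
        induction t with
        | zero => simp
        | succ t iht =>
          have h1 := hnash (k + t) r hrN
          have h2 : α (k + (t + 1)) ≤ α (k + t) := hα (by omega)
          have h3 : (t : ℝ) * α (k + (t + 1)) ≤ t * α (k + t) := by gcongr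
          rw [add_assoc] at h1
          push_cast
          nlinarith
      have hst := hsum t
      rw [hkt] at hst
      have ht2 : (n : ℝ) ≤ 2 * t := by exact_mod_cast hnt
      have ht0 : (0 : ℝ) < t := by linarith
      have hαk : α k ≤ K₃ * (Θ * (n : ℝ) ^ p) := by
        refine (ih k hkn hk1).trans ?_
        gcongr
        rw [hΘ, ← Real.mul_rpow (by norm_num) hn0.le]
        refine rpow_neg_half_antitone d (by positivity) ?_
        have : (n : ℝ) ≤ 3 * k := by exact_mod_cast htn
        linarith
      have hfirst : K₁ * (r : ℝ) ^ 2 * (α k - α n) ≤ t * (K₃ / 2 * (n : ℝ) ^ p) := by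
        calc K₁ * (r : ℝ) ^ 2 * (α k - α n)
            ≤ K₁ * (4 * (η * n)) * (K₃ * (Θ * (n : ℝ) ^ p)) := by
              have h1 : α k - α n ≤ K₃ * (Θ * (n : ℝ) ^ p) := by linarith [hα0 n]
              have h2 : 0 ≤ α k - α n := sub_nonneg.2 (hα hkn.le)
              gcongr
          _ = n * (K₃ / 4 * (n : ℝ) ^ p) := by
              rw [hη]
              field_simp
              norm_num
          _ ≤ 2 * t * (K₃ / 4 * (n : ℝ) ^ p) := by gcongr
          _ = _ := by ring
      have hmain : t * α n ≤ t * (K₃ / 2 * (n : ℝ) ^ p + K₂ * (η * n) ^ p) := by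
        have : t * (K₂ * ((r : ℝ) ^ d)⁻¹) ≤ t * (K₂ * (η * n) ^ p) := by gcongr
        linarith
      refine (le_of_mul_le_mul_left hmain ht0).trans ?_
      rw [hmul]
      have h4 : K₂ * (η ^ p * (n : ℝ) ^ p) ≤ K₃ / 2 * (n : ℝ) ^ p := by
        rw [hK₃]
        have : 0 ≤ η ^ p * (n : ℝ) ^ p := by positivity
        nlinarith
      linarith

/-- Polynomial decay of the mass of half spaces, together with an off-diagonal estimate at each
scale, upgrades to Gaussian decay. -/
theorem gaussian_decay (d : ℕ) {R B A₀ : ℝ} (hR : 0 ≤ R) (hB : 1 ≤ B) (hA₀ : 0 < A₀) :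
    ∃ A > 0, ∃ κ > 0, ∀ J : ℝ → ℕ → ℝ,
      (∀ r n, 1 ≤ n → J r n ≤ A₀ * (n : ℝ) ^ (-(d : ℝ) / 2)) →
      (∀ (r : ℝ) (n : ℕ), R * n < r → J r n ≤ 0) →
      (∀ (r s t : ℝ) (m k : ℕ), 1 ≤ m → 0 ≤ t → J r (m + k) ≤ 2 * J s m +
        2 * Real.exp (-(t * (r - s)) + 2 * (B * t) + 16 * (B * t) ^ 2 * k) *
          (A₀ * (m : ℝ) ^ (-(d : ℝ) / 2))) →
      ∀ n : ℕ, 1 ≤ n → ∀ r, 0 ≤ r →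
        J r n ≤ A * (n : ℝ) ^ (-(d : ℝ) / 2) * Real.exp (-(κ * r ^ 2 / n)) := by
  set p : ℝ := -(d : ℝ) / 2 with hp
  set Θ : ℝ := (3⁻¹ : ℝ) ^ p with hΘ
  have hΘ1 : 1 ≤ Θ := by
    have := rpow_neg_half_antitone d (s := 3⁻¹) (t := 1) (by norm_num) (by norm_num)
    rwa [Real.one_rpow] at this
  have hB0 : 0 < B := by linarith
  set κ : ℝ := (2304 * B ^ 2)⁻¹ with hκ
  have hκ0 : 0 < κ := by positivity
  have hκ1 : κ ≤ 1 := inv_le_one_of_one_le₀ (by nlinarith)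
  set G : ℝ := 18 / 7 * Real.log (4 * Θ) with hG
  set A : ℝ := A₀ * Real.exp (R ^ 2) + A₀ * Real.exp G + 4 * Real.exp R * A₀ * Θ with hA
  have hApos : 0 < A := by positivity
  have hA1 : A₀ * Real.exp (R ^ 2) ≤ A := by
    have : 0 ≤ A₀ * Real.exp G + 4 * Real.exp R * A₀ * Θ := by positivity
    linarith
  have hA2 : A₀ * Real.exp G ≤ A := by
    have : 0 ≤ A₀ * Real.exp (R ^ 2) + 4 * Real.exp R * A₀ * Θ := by positivity
    linarith
  have hA3 : 4 * Real.exp R * A₀ * Θ ≤ A := by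
    have : 0 ≤ A₀ * Real.exp (R ^ 2) + A₀ * Real.exp G := by positivity
    linarith
  refine ⟨A, hApos, κ, hκ0, ?_⟩
  intro J hJ1 hJ2 hJ3 n
  induction n using Nat.strong_induction_on with
  | _ n ih =>
    intro hn r hr
    have hn0 : (0 : ℝ) < n := by exact_mod_cast hn
    have hφ : 0 < (n : ℝ) ^ p := by positivity
    by_cases hrn : R * n < r
    · exact (hJ2 r n hrn).trans (by positivity)
    push Not at hrn
    have htriv : ∀ Γ, κ * r ^ 2 / n ≤ Γ → A₀ * Real.exp Γ ≤ A →
        J r n ≤ A * (n : ℝ) ^ p * Real.exp (-(κ * r ^ 2 / n)) := by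
      intro Γ hΓ hΓA
      calc J r n ≤ A₀ * (n : ℝ) ^ p := hJ1 r n hn
        _ = A₀ * Real.exp Γ * (n : ℝ) ^ p * Real.exp (-Γ) := by
          rw [Real.exp_neg]
          field_simp
        _ ≤ _ := by gcongr
    rcases Nat.lt_or_ge n 2 with hn2 | hn2
    · have hn1 : n = 1 := by omega
      refine htriv (R ^ 2) ?_ hA1
      subst hn1
      simp only [Nat.cast_one, mul_one, div_one] at hrn ⊢
      have : r ^ 2 ≤ R ^ 2 := by gcongr
      nlinarith [sq_nonneg r]
    by_cases hGr : κ * r ^ 2 / n ≤ G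
    · exact htriv G hGr hA2
    push Not at hGr
    obtain ⟨m, k, hm1, hmn, hmn2, hnm3, hnk, hmk⟩ :
        ∃ m k : ℕ, 1 ≤ m ∧ m < n ∧ 2 * m ≤ n ∧ n ≤ 3 * m ∧ n ≤ 2 * k ∧ m + k = n :=
      ⟨n / 2, n - n / 2, by omega, by omega, by omega, by omega, by omega, by omega⟩
    have hm0 : (0 : ℝ) < m := by exact_mod_cast hm1
    have hk2 : (n : ℝ) ≤ 2 * k := by exact_mod_cast hnk
    have hk0 : (0 : ℝ) < k := by linarith
    have hkn : (k : ℝ) ≤ n := by exact_mod_cast (by omega : k ≤ n)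
    have hmn2' : 2 * (m : ℝ) ≤ n := by exact_mod_cast hmn2
    have hφm : (m : ℝ) ^ p ≤ Θ * (n : ℝ) ^ p := by
      rw [hΘ, ← Real.mul_rpow (by norm_num) hn0.le]
      refine rpow_neg_half_antitone d (by positivity) ?_
      have : (n : ℝ) ≤ 3 * m := by exact_mod_cast hnm3
      linarith
    set X : ℝ := κ * r ^ 2 / n with hX
    set t : ℝ := r / 6 / (32 * B ^ 2 * k) with ht
    have h3 := hJ3 r (5 / 6 * r) t m k hm1 (by positivity)
    rw [hmk] at h3
    have hJs : J (5 / 6 * r) m ≤ A * (Θ * (n : ℝ) ^ p) * Real.exp (-(25 / 18 * X)) := by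
      refine (ih m hmn hm1 (5 / 6 * r) (by positivity)).trans ?_
      gcongr
      have : 25 / 18 * X = κ * (5 / 6 * r) ^ 2 / (n / 2) := by
        rw [hX]
        field_simp
        ring
      rw [this]
      gcongr
      linarith
    have hexp : -(t * (r - 5 / 6 * r)) + 2 * (B * t) + 16 * (B * t) ^ 2 * k ≤ R + -X := by
      have e1 : -(t * (r - 5 / 6 * r)) + 2 * (B * t) + 16 * (B * t) ^ 2 * k =
          r / (96 * B * k) - r ^ 2 / (2304 * B ^ 2 * k) := by
        rw [ht]
        field_simp
        ring
      have e2 : X ≤ r ^ 2 / (2304 * B ^ 2 * k) := by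
        rw [hX, hκ, inv_mul_eq_div, div_div]
        gcongr
      have e3 : r / (96 * B * k) ≤ R := by
        rw [div_le_iff₀ (by positivity)]
        have h5 : R * n ≤ R * (2 * k) := by gcongr
        have h6 : R * (2 * k) ≤ R * (96 * B * k) := by
          gcongr
          linarith
        linarith
      linarith
    have hGexp : Θ * Real.exp (-(7 / 18 * X)) ≤ 1 / 4 := by
      have : Real.exp (-(7 / 18 * X)) ≤ Real.exp (-(Real.log (4 * Θ))) := by
        gcongr
        rw [hG] at hGr
        linarith
      rw [Real.exp_neg (Real.log _), Real.exp_log (by positivity)] at this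
      calc Θ * Real.exp (-(7 / 18 * X)) ≤ Θ * (4 * Θ)⁻¹ := by gcongr
        _ = 1 / 4 := by field_simp
    have hsplit : Real.exp (-(25 / 18 * X)) = Real.exp (-(7 / 18 * X)) * Real.exp (-X) := by
      rw [← Real.exp_add]
      congr 1
      ring
    have hfirst : 2 * J (5 / 6 * r) m ≤ A / 2 * (n : ℝ) ^ p * Real.exp (-X) := by
      rw [hsplit] at hJs
      have : A * (n : ℝ) ^ p * Real.exp (-X) * (Θ * Real.exp (-(7 / 18 * X))) ≤
          A * (n : ℝ) ^ p * Real.exp (-X) * (1 / 4) := by gcongr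
      linarith
    have hsecond : 2 * Real.exp (-(t * (r - 5 / 6 * r)) + 2 * (B * t) + 16 * (B * t) ^ 2 * k) *
        (A₀ * (m : ℝ) ^ p) ≤ A / 2 * (n : ℝ) ^ p * Real.exp (-X) := by
      calc _ ≤ 2 * Real.exp (R + -X) * (A₀ * (Θ * (n : ℝ) ^ p)) := by gcongr
        _ = (4 * Real.exp R * A₀ * Θ) / 2 * (n : ℝ) ^ p * Real.exp (-X) := by
          rw [Real.exp_add]
          ring
        _ ≤ _ := by gcongr
    linarith

end Decay

section OnDiagonalBound

/-- On-diagonal heat kernel bound. -/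
theorem exists_flowSum_sq_pt_le {d : ℕ} (hd : 0 < d) {c C ε : ℝ} (hc : 0 < c) (hC : 0 < C)
    (hε : 0 < ε) (N : ℕ) :
    ∃ A₀ > 0, ∀ (V : Finset (Zd d)) (B : ℝ) (b : Zd d → Zd d → ℝ), EllipticFlow V B c C ε N b →
      ∀ (y : Zd d) (n : ℕ), 1 ≤ n →
        flowSum V b (((walkOp V b ^ n) (pt y)) ^ 2) ≤ A₀ * (n : ℝ) ^ (-(d : ℝ) / 2) := by
  set L : ℕ := (2 * N).factorial with hL
  have hL0 : 0 < L := Nat.factorial_pos _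
  have hNL : N ≤ L := le_trans (by omega) (Nat.self_le_factorial (2 * N))
  set δ : ℝ := ε ^ (2 * L) with hδ
  have hδ0 : 0 < δ := by positivity
  set K₁ : ℝ := C * ((d : ℝ) ^ 2 / 2 * (4 * L / δ * (L * (L + 1)) / c)) with hK₁
  have hK₁0 : 0 ≤ K₁ := by positivity
  obtain ⟨K₃, hK₃, hdecay⟩ := decay_of_nash d (K₀ := C) (K₁ := K₁ + 1)
    (K₂ := C * (L / c * C) ^ 2) hC (by linarith) (by positivity)
  set p : ℝ := -(d : ℝ) / 2 with hp
  have hLp : 0 < ((4 * L : ℝ)⁻¹) ^ p := by positivity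
  refine ⟨(K₃ + C) * ((4 * L : ℝ)⁻¹) ^ p, by positivity, ?_⟩
  intro V B b hb y n hn
  have h0 := hb.outflow_pos hc
  have hfin : ∀ m, ((walkOp V b ^ m) (pt y)).support.Finite :=
    finite_support_pow_walkOp (finite_support_pt y)
  set A : ℕ → ℝ := fun m => flowSum V b (((walkOp V b ^ m) (pt y)) ^ 2) with hA
  have hanti : Antitone A := hb.flowSum_sq_antitone h0 (finite_support_pt y)
  have hA0 : A 0 ≤ C := by
    have : A 0 = outflow V b y * pt y y := by
      rw [← flowSum_pt]
      simp only [hA, pow_zero, Module.End.one_apply, sq]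
      rfl
    rw [this, pt_self, mul_one]
    exact hb.outflow_le y
  have hmass : ∀ m, flowSum V b ((walkOp V b ^ m) (pt y)) ≤ C := fun m => by
    rw [hb.flowSum_pow_walkOp h0 (finite_support_pt y)]
    have := flowSum_pt (V := V) (b := b) y 1
    simp only [Pi.one_apply, mul_one] at this
    exact this.trans_le (hb.outflow_le y)
  have hδε : δ ≤ ε := by
    simpa using pow_le_pow_of_le_one hε.le (hb.le_one hc hd) (by omega : 1 ≤ 2 * L)
  have hα := hdecay (fun k => A (2 * L * k)) (fun i j hij => hanti (Nat.mul_le_mul_left _ hij))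
    (fun k => hb.flowSum_nonneg fun x => sq_nonneg _) (by simpa using hA0) (by
      intro k r hr
      have hstep := hb.flowSum_sq_le hc hNL hL0 hδ0 hδε (hb.le_return hc hε hd) (hfin (2 * L * k))
        (hb.pow_walkOp_nonneg (pt_nonneg y) _) hr
      rw [← pow_add_walkOp_apply, ← hK₁] at hstep
      have e1 : 2 * L + 2 * L * k = 2 * L * (k + 1) := by ring
      rw [e1] at hstep
      change A (2 * L * k) ≤ K₁ * (r : ℝ) ^ 2 * (A (2 * L * k) - A (2 * L * (k + 1))) + _ at hstep
      have h1 : 0 ≤ A (2 * L * k) - A (2 * L * (k + 1)) :=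
        sub_nonneg.2 (hanti (Nat.mul_le_mul_left _ (Nat.le_succ k)))
      have h2 : 0 ≤ flowSum V b ((walkOp V b ^ (2 * L * k)) (pt y)) :=
        hb.flowSum_nonneg (hb.pow_walkOp_nonneg (pt_nonneg y) _)
      refine hstep.trans ?_
      gcongr
      · linarith
      · exact hmass _)
  have hn0 : (0 : ℝ) < n := by exact_mod_cast hn
  have hL0' : (0 : ℝ) < L := by exact_mod_cast hL0
  have hmul : ((4 * L : ℝ)⁻¹ * n) ^ p = ((4 * L : ℝ)⁻¹) ^ p * (n : ℝ) ^ p :=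
    Real.mul_rpow (by positivity) hn0.le
  rw [mul_assoc, ← hmul]
  have hpos : 0 ≤ ((4 * L : ℝ)⁻¹ * n) ^ p := by positivity
  rcases Nat.lt_or_ge n (2 * L) with hnL | hnL
  · have h1 : 1 ≤ ((4 * L : ℝ)⁻¹ * n) ^ p := by
      have := rpow_neg_half_antitone d (s := (4 * L : ℝ)⁻¹ * n) (t := 1) (by positivity) (by
        rw [inv_mul_le_iff₀ (by positivity)]
        have : (n : ℝ) ≤ 2 * L := by exact_mod_cast hnL.le
        linarith)
      rwa [Real.one_rpow] at this
    have h2 : A n ≤ C := (hanti (Nat.zero_le n)).trans hA0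
    change A n ≤ _
    nlinarith
  · set k := n / (2 * L) with hk
    have hk1 : 1 ≤ k := (Nat.one_le_div_iff (by omega)).2 hnL
    have hkn : 2 * L * k ≤ n := Nat.mul_div_le n (2 * L)
    have hnk : n ≤ 4 * L * k := by
      have := Nat.lt_mul_div_succ n (by omega : 0 < 2 * L)
      rw [← hk] at this
      nlinarith
    have hk0 : (0 : ℝ) < k := by exact_mod_cast hk1
    have h1 : (k : ℝ) ^ p ≤ ((4 * L : ℝ)⁻¹ * n) ^ p := by
      refine rpow_neg_half_antitone d (by positivity) ?_
      rw [inv_mul_le_iff₀ (by positivity)]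
      exact_mod_cast hnk
    calc A n ≤ A (2 * L * k) := hanti hkn
      _ ≤ K₃ * (k : ℝ) ^ p := hα k hk1
      _ ≤ (K₃ + C) * ((4 * L : ℝ)⁻¹ * n) ^ p := by
        gcongr
        linarith

end OnDiagonalBound

section Tilt

theorem sq_sum_le_of_abs_sub_le {ι : Type*} (s : Finset ι) {q q' f : ι → ℝ} {θ : ℝ}
    (hq' : ∀ v ∈ s, 0 ≤ q' v) (h1 : ∑ v ∈ s, q v = 1) (h1' : ∑ v ∈ s, q' v = 1)
    (hqq : ∀ v ∈ s, |q v - q' v| ≤ θ * q' v) :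
    (∑ v ∈ s, q v * f v) ^ 2 ≤ (1 + θ ^ 2) * ∑ v ∈ s, q' v * f v ^ 2 := by
  have hdiv : ∀ v ∈ s, q v ^ 2 / q' v ≤ 2 * q v - q' v + θ ^ 2 * q' v := fun v hv => by
    have h2 : (q v - q' v) ^ 2 ≤ (θ * q' v) ^ 2 := sq_le_sq' (abs_le.1 (hqq v hv)).1
      (abs_le.1 (hqq v hv)).2
    rcases (hq' v hv).eq_or_lt with h0 | h0
    · have : q v = 0 := by
        have := hqq v hv
        rw [← h0] at this
        simpa using this
      simp [← h0, this]
    · rw [div_le_iff₀ h0]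
      nlinarith
  calc (∑ v ∈ s, q v * f v) ^ 2
      ≤ (∑ v ∈ s, q v ^ 2 / q' v) * ∑ v ∈ s, q' v * f v ^ 2 := by
        refine Finset.sum_sq_le_sum_mul_sum_of_sq_le_mul s
          (fun v hv => div_nonneg (sq_nonneg _) (hq' v hv))
          (fun v hv => mul_nonneg (hq' v hv) (sq_nonneg _)) fun v hv => ?_
        rcases (hq' v hv).eq_or_lt with h0 | h0
        · have : q v = 0 := by
            have := hqq v hv
            rw [← h0] at this
            simpa using this
          simp [this]
        · exact le_of_eq (by field_simp)
    _ ≤ (∑ v ∈ s, (2 * q v - q' v + θ ^ 2 * q' v)) * ∑ v ∈ s, q' v * f v ^ 2 := by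
        refine mul_le_mul_of_nonneg_right (Finset.sum_le_sum hdiv) (Finset.sum_nonneg fun v hv => ?_)
        exact mul_nonneg (hq' v hv) (sq_nonneg _)
    _ = _ := by
        simp only [Finset.sum_add_distrib, Finset.sum_sub_distrib, ← Finset.mul_sum, h1, h1']
        ring

theorem one_add_sq_exp_sub_one_le {s : ℝ} (hs : 0 ≤ s) :
    1 + (Real.exp s - 1) ^ 2 ≤ Real.exp (4 * s ^ 2) := by
  rcases le_total s 1 with h | h
  · have h1 := (abs_le.1 (Real.abs_exp_sub_one_sub_id_le (abs_le.2 ⟨by linarith, h⟩))).2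
    have h2 : Real.exp s - 1 ≤ 2 * s := by nlinarith
    have h3 : 0 ≤ Real.exp s - 1 := by linarith [Real.one_le_exp hs]
    have h4 := Real.add_one_le_exp (4 * s ^ 2)
    nlinarith
  · have h1 := Real.one_le_exp hs
    have h2 : Real.exp s ^ 2 ≤ Real.exp (4 * s ^ 2) := by
      rw [← Real.exp_nat_mul]
      refine Real.exp_le_exp.2 ?_
      push_cast
      nlinarith
    nlinarith

variable {d : ℕ} {V : Finset (Zd d)} {b b' : Zd d → Zd d → ℝ}

theorem outflow_mul_sq_walkOp_le (hb : BalancedFlow V b) (h0 : ∀ x, 0 < outflow V b x) {x : Zd d}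
    {T κ : ℝ} (hκ : 0 ≤ κ)
    (h : ∀ v ∈ V, Real.exp (T - κ) * b x v ≤ b' x v ∧ b' x v ≤ Real.exp (T + κ) * b x v)
    (f : Zd d → ℝ) :
    outflow V b' x * walkOp V b f x ^ 2 ≤
      Real.exp (16 * κ ^ 2) * ∑ v ∈ V, b' x v * f (x + v) ^ 2 := by
  set μ := outflow V b x with hμ
  set μ' := outflow V b' x with hμ'
  have hμ0 : 0 < μ := h0 x
  have hlow : Real.exp (T - κ) * μ ≤ μ' := by
    rw [hμ, hμ', outflow, outflow, Finset.mul_sum]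
    exact Finset.sum_le_sum fun v hv => (h v hv).1
  have hup : μ' ≤ Real.exp (T + κ) * μ := by
    rw [hμ, hμ', outflow, outflow, Finset.mul_sum]
    exact Finset.sum_le_sum fun v hv => (h v hv).2
  have hμ'0 : 0 < μ' := lt_of_lt_of_le (by positivity) hlow
  have hb' : ∀ v ∈ V, 0 ≤ b' x v := fun v hv =>
    le_trans (mul_nonneg (Real.exp_pos _).le (hb.nonneg x v)) (h v hv).1
  have hdiffexp : Real.exp (T + κ) = Real.exp (2 * κ) * Real.exp (T - κ) := by
    rw [← Real.exp_add]
    congr 1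
    ring
  have hkey := sq_sum_le_of_abs_sub_le V (q := fun v => b x v / μ) (q' := fun v => b' x v / μ')
    (f := fun v => f (x + v)) (θ := Real.exp (2 * κ) - 1)
    (fun v hv => div_nonneg (hb' v hv) hμ'0.le)
    (by rw [← Finset.sum_div]; exact div_self hμ0.ne')
    (by rw [← Finset.sum_div]; exact div_self hμ'0.ne') (by
      intro v hv
      have hq1 : b x v / μ ≤ Real.exp (2 * κ) * (b' x v / μ') := by
        rw [mul_div_assoc', div_le_div_iff₀ hμ0 hμ'0]
        calc b x v * μ' ≤ b x v * (Real.exp (T + κ) * μ) :=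
              mul_le_mul_of_nonneg_left hup (hb.nonneg x v)
          _ = Real.exp (2 * κ) * (Real.exp (T - κ) * b x v) * μ := by rw [hdiffexp]; ring
          _ ≤ Real.exp (2 * κ) * b' x v * μ := by
              gcongr
              exact (h v hv).1
      have hq2 : b' x v / μ' ≤ Real.exp (2 * κ) * (b x v / μ) := by
        rw [mul_div_assoc', div_le_div_iff₀ hμ'0 hμ0]
        calc b' x v * μ ≤ Real.exp (T + κ) * b x v * μ := by
              gcongr
              exact (h v hv).2
          _ = Real.exp (2 * κ) * b x v * (Real.exp (T - κ) * μ) := by rw [hdiffexp]; ring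
          _ ≤ _ := mul_le_mul_of_nonneg_left hlow
              (mul_nonneg (Real.exp_pos _).le (hb.nonneg x v))
      have hE : 1 ≤ Real.exp (2 * κ) := Real.one_le_exp (by linarith)
      have hq0 : 0 ≤ b' x v / μ' := div_nonneg (hb' v hv) hμ'0.le
      have hq0' : 0 ≤ b x v / μ := div_nonneg (hb.nonneg x v) hμ0.le
      generalize Real.exp (2 * κ) = E at *
      generalize b x v / μ = q at *
      generalize b' x v / μ' = q' at *
      rw [abs_le]
      constructor
      · rcases le_total q' q with hle | hle
        · nlinarith
        · nlinarith
      · linarith)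
  have hexp := one_add_sq_exp_sub_one_le (s := 2 * κ) (by linarith)
  have e1 : (∑ v ∈ V, b x v / μ * f (x + v)) = walkOp V b f x := by
    rw [walkOp_apply, Finset.sum_div]
    exact Finset.sum_congr rfl fun v _ => by ring
  have e2 : μ' * ∑ v ∈ V, b' x v / μ' * f (x + v) ^ 2 = ∑ v ∈ V, b' x v * f (x + v) ^ 2 := by
    rw [Finset.mul_sum]
    exact Finset.sum_congr rfl fun v _ => by field_simp
  have hS0 : 0 ≤ ∑ v ∈ V, b' x v * f (x + v) ^ 2 :=
    Finset.sum_nonneg fun v hv => mul_nonneg (hb' v hv) (sq_nonneg _)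
  rw [e1] at hkey
  calc μ' * walkOp V b f x ^ 2
      ≤ μ' * ((1 + (Real.exp (2 * κ) - 1) ^ 2) * ∑ v ∈ V, b' x v / μ' * f (x + v) ^ 2) := by
        gcongr
    _ = (1 + (Real.exp (2 * κ) - 1) ^ 2) * ∑ v ∈ V, b' x v * f (x + v) ^ 2 := by
        rw [← e2]
        ring
    _ ≤ Real.exp (4 * (2 * κ) ^ 2) * ∑ v ∈ V, b' x v * f (x + v) ^ 2 := by gcongr
    _ = _ := by
        congr 2
        ring

theorem flowSum_sq_pow_walkOp_le (hb : BalancedFlow V b) (hb' : BalancedFlow V b')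
    (h0 : ∀ x, 0 < outflow V b x) {T : Zd d → ℝ} {κ : ℝ} (hκ : 0 ≤ κ)
    (h : ∀ x, ∀ v ∈ V,
      Real.exp (T x - κ) * b x v ≤ b' x v ∧ b' x v ≤ Real.exp (T x + κ) * b x v)
    {f : Zd d → ℝ} (hf : f.support.Finite) (m : ℕ) :
    flowSum V b' (((walkOp V b ^ m) f) ^ 2) ≤
      Real.exp (16 * κ ^ 2 * m) * flowSum V b' (f ^ 2) := by
  induction m with
  | zero => simp
  | succ m ih =>
    set g := (walkOp V b ^ m) f with hg
    have hgf : g.support.Finite := finite_support_pow_walkOp hf m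
    have hstep : flowSum V b' ((walkOp V b g) ^ 2) ≤
        Real.exp (16 * κ ^ 2) * flowSum V b' (g ^ 2) := by
      rw [← hb'.tsum_flow_mul (finite_support_sq hgf), ← tsum_mul_left, flowSum]
      refine (summable_flowSum (finite_support_sq (finite_support_walkOp hgf))).tsum_le_tsum
        (fun x => outflow_mul_sq_walkOp_le hb h0 hκ (h x) g) (Summable.mul_left _ ?_)
      exact summable_sum fun v _ => summable_of_zero (finite_support_shift hgf v)
        fun x hx => by simp [hx]
    rw [pow_succ_walkOp_apply]
    refine hstep.trans ((mul_le_mul_of_nonneg_left ih (Real.exp_pos _).le).trans (le_of_eq ?_))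
    rw [← mul_assoc, ← Real.exp_add]
    push_cast
    ring_nf

/-- The exponentially weighted `L²` norm grows at most like `exp (C t² m)`. -/
theorem EllipticFlow.flowSum_exp_mul_sq_le {B c C ε : ℝ} {N : ℕ}
    (hb : EllipticFlow V B c C ε N b) (hc : 0 < c) (hB : 0 ≤ B) {f : Zd d → ℝ}
    (hf : f.support.Finite) (i : Fin d) (t : ℝ) (m : ℕ) :
    flowSum V b (fun x => Real.exp (t * x i) * (walkOp V b ^ m) f x ^ 2) ≤
      Real.exp (2 * (B * |t|) + 16 * (B * |t|) ^ 2 * m) *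
        flowSum V b (fun x => Real.exp (t * x i) * f x ^ 2) := by
  have h0 := hb.outflow_pos hc
  obtain ⟨b', hb', hbb'⟩ := hb.tilt i t
  set κ := B * |t| with hκ
  have hκ0 : 0 ≤ κ := by positivity
  have hmf : ((walkOp V b ^ m) f).support.Finite := finite_support_pow_walkOp hf m
  have hlow : ∀ x, Real.exp (t * x i - κ) * outflow V b x ≤ outflow V b' x := fun x => by
    rw [outflow, outflow, Finset.mul_sum]
    exact Finset.sum_le_sum fun v hv => (hbb' x v hv).1
  have hup : ∀ x, outflow V b' x ≤ Real.exp (t * x i + κ) * outflow V b x := fun x => by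
    rw [outflow, outflow, Finset.mul_sum]
    exact Finset.sum_le_sum fun v hv => (hbb' x v hv).2
  have hmain := flowSum_sq_pow_walkOp_le hb.toBalancedFlow hb' h0 hκ0 hbb' hf m
  have h1 : flowSum V b (fun x => Real.exp (t * x i) * (walkOp V b ^ m) f x ^ 2) ≤
      Real.exp κ * flowSum V b' (((walkOp V b ^ m) f) ^ 2) := by
    rw [flowSum, flowSum, ← tsum_mul_left]
    refine (summable_of_zero hmf fun x hx => by simp [hx]).tsum_le_tsum (fun x => ?_)
      ((summable_flowSum (finite_support_sq hmf)).mul_left _)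
    calc outflow V b x * (Real.exp (t * x i) * (walkOp V b ^ m) f x ^ 2)
        = Real.exp κ * (Real.exp (t * x i - κ) * outflow V b x * (walkOp V b ^ m) f x ^ 2) := by
          rw [Real.exp_sub]
          field_simp
      _ ≤ Real.exp κ * (outflow V b' x * (walkOp V b ^ m) f x ^ 2) := by
          gcongr
          exact hlow x
  have h2 : flowSum V b' (f ^ 2) ≤
      Real.exp κ * flowSum V b (fun x => Real.exp (t * x i) * f x ^ 2) := by
    rw [flowSum, flowSum, ← tsum_mul_left]
    refine (summable_flowSum (finite_support_sq hf)).tsum_le_tsum (fun x => ?_)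
      ((summable_of_zero hf fun x hx => by simp [hx]).mul_left _)
    calc outflow V b' x * f x ^ 2 ≤ Real.exp (t * x i + κ) * outflow V b x * f x ^ 2 := by
          gcongr
          exact hup x
      _ = _ := by
          rw [Real.exp_add]
          ring
  calc _ ≤ _ := h1
    _ ≤ Real.exp κ * (Real.exp (16 * κ ^ 2 * m) *
        (Real.exp κ * flowSum V b (fun x => Real.exp (t * x i) * f x ^ 2))) := by
      gcongr
      exact hmain.trans (mul_le_mul_of_nonneg_left h2 (Real.exp_pos _).le)
    _ = _ := by
      rw [two_mul, Real.exp_add, Real.exp_add]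
      ring

end Tilt

section HalfSpace

variable {d : ℕ} {V : Finset (Zd d)} {b : Zd d → Zd d → ℝ}

theorem pow_walkOp_pt_eq_zero {R : ℝ} (hV : ∀ v ∈ V, ∀ i, |(v i : ℝ)| ≤ R) (y : Zd d) (n : ℕ)
    (x : Zd d) (i : Fin d) (h : R * n < |(x i : ℝ) - y i|) : (walkOp V b ^ n) (pt y) x = 0 := by
  induction n generalizing x with
  | zero =>
    have : x ≠ y := fun hxy => by simp [hxy] at h
    simp [pt, this]
  | succ n ih =>
    rw [pow_succ_walkOp_apply, walkOp_apply, Finset.sum_eq_zero, zero_div]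
    intro v hv
    rw [ih, mul_zero]
    have h1 := hV v hv i
    push_cast at h
    have h2 : |(x i : ℝ) - y i| ≤ |((x + v) i : ℝ) - y i| + |(v i : ℝ)| := by
      have : (x i : ℝ) - y i = (((x + v) i : ℤ) - y i) + -(v i : ℝ) := by
        push_cast [Pi.add_apply]
        ring
      rw [this, ← abs_neg (v i : ℝ)]
      exact abs_add_le _ _
    linarith

/-- The `L²` mass of the heat kernel in a half space at distance `r` from the pole `y`. -/
def halfSpaceMass (V : Finset (Zd d)) (b : Zd d → Zd d → ℝ) (y : Zd d) (i : Fin d) (σ r : ℝ)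
    (n : ℕ) : ℝ :=
  flowSum V b fun x => if r ≤ σ * ((x i : ℝ) - y i) then (walkOp V b ^ n) (pt y) x ^ 2 else 0

theorem EllipticFlow.halfSpaceMass_add_le {B c C ε : ℝ} {N : ℕ}
    (hb : EllipticFlow V B c C ε N b) (hc : 0 < c) (hB : 0 ≤ B) (y : Zd d) (i : Fin d)
    {σ : ℝ} (hσ : |σ| = 1) (r s : ℝ) {t : ℝ} (ht : 0 ≤ t) (m k : ℕ) :
    halfSpaceMass V b y i σ r (m + k) ≤ 2 * halfSpaceMass V b y i σ s m +
      2 * Real.exp (-(t * (r - s)) + 2 * (B * t) + 16 * (B * t) ^ 2 * k) *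
        flowSum V b (((walkOp V b ^ m) (pt y)) ^ 2) := by
  have h0 := hb.outflow_pos hc
  set f := (walkOp V b ^ m) (pt y) with hf
  have hff : f.support.Finite := finite_support_pow_walkOp (finite_support_pt y) m
  set w : Zd d → ℝ := fun x => if s ≤ σ * ((x i : ℝ) - y i) then f x else 0 with hw
  set u : Zd d → ℝ := fun x => if s ≤ σ * ((x i : ℝ) - y i) then 0 else f x with hu
  have hwf : w.support.Finite := finite_support_of_zero hff fun x hx => by simp [hw, hx]
  have huf : u.support.Finite := finite_support_of_zero hff fun x hx => by simp [hu, hx]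
  have hfuw : f = u + w := by
    funext x
    simp only [hu, hw, Pi.add_apply]
    split_ifs <;> simp
  have hPk : (walkOp V b ^ (m + k)) (pt y) = (walkOp V b ^ k) u + (walkOp V b ^ k) w := by
    rw [add_comm, pow_add_walkOp_apply, ← map_add, ← hfuw]
  have hPu : ((walkOp V b ^ k) u).support.Finite := finite_support_pow_walkOp huf k
  have hPw : ((walkOp V b ^ k) w).support.Finite := finite_support_pow_walkOp hwf k
  set Y : ℝ := t * (σ * y i + r) with hY
  set eu : Zd d → ℝ := fun x => Real.exp (t * σ * x i) * (walkOp V b ^ k) u x ^ 2 with heu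
  have heuf : eu.support.Finite := finite_support_of_zero hPu fun x hx => by simp [heu, hx]
  have hsplit : halfSpaceMass V b y i σ r (m + k) ≤
      2 * flowSum V b (((walkOp V b ^ k) w) ^ 2) + 2 * Real.exp (-Y) * flowSum V b eu := by
    rw [← flowSum_smul, ← flowSum_smul, ← flowSum_add
      (finite_support_of_zero (finite_support_sq hPw) fun x hx => by simp [hx])
      (finite_support_of_zero heuf fun x hx => by simp [hx])]
    refine hb.flowSum_mono
      (finite_support_of_zero
        (finite_support_pow_walkOp (V := V) (b := b) (finite_support_pt y) (m + k))
        fun x hx => by simp [hx])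
      (finite_support_of_zero (f := fun x => |(walkOp V b ^ k) u x| + |(walkOp V b ^ k) w x|)
        ((hPu.union hPw).subset fun x hx => ?_) fun x hx => ?_) fun x => ?_
    · by_contra h
      simp only [Set.mem_union, Function.mem_support, not_or, not_not] at h
      exact hx (by simp [h.1, h.2])
    · have h1 : (walkOp V b ^ k) u x = 0 := by
        refine abs_eq_zero.1 (le_antisymm ?_ (abs_nonneg _))
        linarith [abs_nonneg ((walkOp V b ^ k) w x)]
      have h2 : (walkOp V b ^ k) w x = 0 := by
        refine abs_eq_zero.1 (le_antisymm ?_ (abs_nonneg _))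
        linarith [abs_nonneg ((walkOp V b ^ k) u x)]
      simp [heu, h1, h2]
    · simp only [Pi.add_apply, Pi.smul_apply, smul_eq_mul, Pi.pow_apply, heu, hPk]
      have hexp : 0 < Real.exp (-Y) * Real.exp (t * σ * x i) := by positivity
      split_ifs with hx
      · have h1 : 1 ≤ Real.exp (-Y) * Real.exp (t * σ * x i) := by
          rw [← Real.exp_add]
          refine Real.one_le_exp ?_
          have : -Y + t * σ * x i = t * (σ * ((x i : ℝ) - y i) - r) := by
            rw [hY]
            ring
          rw [this]
          exact mul_nonneg ht (by linarith)
        nlinarith [sq_nonneg ((walkOp V b ^ k) u x - (walkOp V b ^ k) w x),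
          sq_nonneg ((walkOp V b ^ k) u x)]
      · have : 0 ≤ Real.exp (-Y) * Real.exp (t * σ * x i) * (walkOp V b ^ k) u x ^ 2 := by
          positivity
        nlinarith [sq_nonneg ((walkOp V b ^ k) w x)]
  have hW : flowSum V b (((walkOp V b ^ k) w) ^ 2) ≤ halfSpaceMass V b y i σ s m := by
    have h1 := hb.flowSum_sq_antitone h0 hwf (Nat.zero_le k)
    refine h1.trans (le_of_eq ?_)
    rw [halfSpaceMass]
    change flowSum V b (((walkOp V b ^ 0) w) ^ 2) = _
    congr 1
    funext x
    simp only [pow_zero, Module.End.one_apply, Pi.pow_apply, hw]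
    split_ifs <;> simp [hf]
  have hU : flowSum V b eu ≤ Real.exp (2 * (B * t) + 16 * (B * t) ^ 2 * k) *
      (Real.exp (t * (σ * y i + s)) * flowSum V b (f ^ 2)) := by
    have h1 := hb.flowSum_exp_mul_sq_le hc hB huf i (t * σ) k
    rw [abs_mul, hσ, mul_one, abs_of_nonneg ht] at h1
    refine h1.trans (mul_le_mul_of_nonneg_left ?_ (Real.exp_pos _).le)
    rw [← flowSum_smul]
    refine hb.flowSum_mono (finite_support_of_zero huf fun x hx => by simp [hx])
      (finite_support_of_zero hff fun x hx => by simp [hx]) fun x => ?_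
    simp only [Pi.smul_apply, smul_eq_mul, Pi.pow_apply, hu]
    split_ifs with hx
    · rw [zero_pow two_ne_zero, mul_zero]
      positivity
    · push Not at hx
      refine mul_le_mul_of_nonneg_right (Real.exp_le_exp.2 ?_) (sq_nonneg _)
      have : t * (σ * ((x i : ℝ) - y i)) ≤ t * s := mul_le_mul_of_nonneg_left hx.le ht
      nlinarith
  calc _ ≤ _ := hsplit
    _ ≤ 2 * halfSpaceMass V b y i σ s m + 2 * Real.exp (-Y) *
        (Real.exp (2 * (B * t) + 16 * (B * t) ^ 2 * k) *
          (Real.exp (t * (σ * y i + s)) * flowSum V b (f ^ 2))) := by gcongr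
    _ = _ := by
      have : -(t * (r - s)) + 2 * (B * t) + 16 * (B * t) ^ 2 * k =
          -Y + (2 * (B * t) + 16 * (B * t) ^ 2 * k) + t * (σ * y i + s) := by
        rw [hY]
        ring
      rw [this, Real.exp_add (-Y + _), Real.exp_add (-Y)]
      ring

/-- Gaussian decay of the `L²` mass of the heat kernel in half spaces. -/
theorem exists_halfSpaceMass_le {d : ℕ} (hd : 0 < d) {R B c C ε : ℝ} (hR : 0 ≤ R) (hB : 1 ≤ B)
    (hc : 0 < c) (hC : 0 < C) (hε : 0 < ε) (N : ℕ) :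
    ∃ A > 0, ∃ κ > 0, ∀ (V : Finset (Zd d)) (b : Zd d → Zd d → ℝ),
      (∀ v ∈ V, ∀ i, |(v i : ℝ)| ≤ R) → EllipticFlow V B c C ε N b →
      ∀ (y : Zd d) (n : ℕ), 1 ≤ n →
        flowSum V b (((walkOp V b ^ n) (pt y)) ^ 2) ≤ A * (n : ℝ) ^ (-(d : ℝ) / 2) ∧
        ∀ (i : Fin d) (σ : ℝ), |σ| = 1 → ∀ r, 0 ≤ r → halfSpaceMass V b y i σ r n ≤
          A * (n : ℝ) ^ (-(d : ℝ) / 2) * Real.exp (-(κ * r ^ 2 / n)) := by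
  obtain ⟨A₀, hA₀, hdiag⟩ := exists_flowSum_sq_pt_le hd hc hC hε N
  obtain ⟨A, hA, κ, hκ, hgauss⟩ := gaussian_decay d hR hB hA₀
  refine ⟨A₀ + A, by positivity, κ, hκ, ?_⟩
  intro V b hV hb y n hn
  have hfin : ∀ n, ((walkOp V b ^ n) (pt y)).support.Finite :=
    finite_support_pow_walkOp (finite_support_pt y)
  have hφ : 0 ≤ (n : ℝ) ^ (-(d : ℝ) / 2) := by positivity
  refine ⟨(hdiag V B b hb y n hn).trans (by nlinarith), fun i σ hσ r hr => ?_⟩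
  refine (hgauss (halfSpaceMass V b y i σ) ?_ ?_ ?_ n hn r hr).trans ?_
  · intro r n hn
    refine le_trans (hb.flowSum_mono (finite_support_of_zero (hfin n) fun x hx => by simp [hx])
      (finite_support_sq (hfin n)) fun x => ?_) (hdiag V B b hb y n hn)
    simp only [Pi.pow_apply]
    split_ifs
    · exact le_rfl
    · exact sq_nonneg _
  · intro r n hrn
    refine le_of_eq ?_
    rw [halfSpaceMass, flowSum]
    refine (tsum_congr fun x => ?_).trans tsum_zero
    split_ifs with hx
    · rw [pow_walkOp_pt_eq_zero hV y n x i, zero_pow two_ne_zero, mul_zero]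
      calc R * n < r := hrn
        _ ≤ _ := hx
        _ ≤ |σ * ((x i : ℝ) - y i)| := le_abs_self _
        _ = _ := by rw [abs_mul, hσ, one_mul]
    · exact mul_zero _
  · intro r s t m k hm ht
    refine (hb.halfSpaceMass_add_le hc (by linarith) y i hσ r s ht m k).trans ?_
    gcongr
    exact hdiag V B b hb y m hm
  · gcongr
    linarith

end HalfSpace

section Reversal

variable {d : ℕ} {V : Finset (Zd d)} {b : Zd d → Zd d → ℝ}

/-- The flow obtained by reversing all jumps. -/
def revFlow (b : Zd d → Zd d → ℝ) (x v : Zd d) : ℝ := b (x + v) (-v)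

theorem sum_neg_of_symm (hV : ∀ v ∈ V, -v ∈ V) (f : Zd d → ℝ) :
    ∑ v ∈ V, f (-v) = ∑ v ∈ V, f v :=
  Finset.sum_nbij' (fun v => -v) (fun v => -v) hV hV (fun v _ => neg_neg v) (fun v _ => neg_neg v)
    fun _ _ => rfl

theorem BalancedFlow.outflow_revFlow (hb : BalancedFlow V b) (hV : ∀ v ∈ V, -v ∈ V) :
    outflow V (revFlow b) = outflow V b := by
  funext x
  rw [← hb.balanced x, ← sum_neg_of_symm hV fun v => b (x - v) v]
  simp only [outflow, revFlow, sub_neg_eq_add]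

theorem BalancedFlow.flowSum_revFlow (hb : BalancedFlow V b) (hV : ∀ v ∈ V, -v ∈ V) :
    flowSum V (revFlow b) = flowSum V b := by
  funext h
  simp only [flowSum, hb.outflow_revFlow hV]

theorem BalancedFlow.revFlow (hb : BalancedFlow V b) (hV : ∀ v ∈ V, -v ∈ V) :
    BalancedFlow V (revFlow b) where
  nonneg x v := hb.nonneg _ _
  balanced y := by
    rw [hb.outflow_revFlow hV, outflow, ← sum_neg_of_symm hV fun v => b y v]
    simp only [_root_.revFlow, sub_add_cancel]

/-- Reversing the flow yields the adjoint of the walk operator. -/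
theorem BalancedFlow.flowSum_mul_walkOp (hb : BalancedFlow V b) (hV : ∀ v ∈ V, -v ∈ V)
    (h0 : ∀ x, 0 < outflow V b x) {u w : Zd d → ℝ} (hu : u.support.Finite)
    (hw : w.support.Finite) :
    flowSum V b (u * walkOp V b w) = flowSum V b (walkOp V (_root_.revFlow b) u * w) := by
  have h0' : ∀ x, 0 < outflow V (_root_.revFlow b) x := by
    rw [hb.outflow_revFlow hV]
    exact h0
  have hl : flowSum V b (u * walkOp V b w) = ∑' x, ∑ v ∈ V, u x * (b x v * w (x + v)) :=
    tsum_congr fun x => by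
      rw [← Finset.mul_sum, ← outflow_mul_walkOp h0, Pi.mul_apply]
      ring
  have hr : flowSum V b (walkOp V (_root_.revFlow b) u * w) =
      ∑' x, ∑ v ∈ V, b (x - v) v * u (x - v) * w x :=
    tsum_congr fun x => by
      rw [Pi.mul_apply, ← mul_assoc, ← hb.outflow_revFlow hV, outflow_mul_walkOp h0',
        ← sum_neg_of_symm hV, Finset.sum_mul]
      simp only [_root_.revFlow, neg_neg, sub_eq_add_neg]
  rw [hl, hr, Summable.tsum_finsetSum fun v _ => summable_of_zero hu fun x hx => by simp [hx],
    Summable.tsum_finsetSum fun v _ => summable_of_zero hw fun x hx => by simp [hx]]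
  refine Finset.sum_congr rfl fun v _ => ?_
  rw [← tsum_shift (fun x => b (x - v) v * u (x - v) * w x) v]
  exact tsum_congr fun x => by
    rw [add_sub_cancel_right]
    ring

theorem BalancedFlow.flowSum_mul_pow_walkOp (hb : BalancedFlow V b) (hV : ∀ v ∈ V, -v ∈ V)
    (h0 : ∀ x, 0 < outflow V b x) {u w : Zd d → ℝ} (hu : u.support.Finite)
    (hw : w.support.Finite) (m : ℕ) :
    flowSum V b (u * (walkOp V b ^ m) w) = flowSum V b ((walkOp V (_root_.revFlow b) ^ m) u * w) := by
  induction m generalizing w with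
  | zero => simp
  | succ m ih =>
    rw [pow_add_walkOp_apply m 1, pow_one, ih (finite_support_walkOp hw),
      hb.flowSum_mul_walkOp hV h0 (finite_support_pow_walkOp hu m) hw, pow_succ_walkOp_apply]

theorem BalancedFlow.outflow_mul_pow_walkOp_revFlow (hb : BalancedFlow V b)
    (hV : ∀ v ∈ V, -v ∈ V) (h0 : ∀ x, 0 < outflow V b x) (m : ℕ) (x y : Zd d) :
    outflow V b x * (walkOp V (_root_.revFlow b) ^ m) (pt y) x =
      outflow V b y * (walkOp V b ^ m) (pt x) y := by
  have := hb.flowSum_mul_pow_walkOp hV h0 (finite_support_pt y) (finite_support_pt x) m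
  rw [mul_comm ((walkOp V (_root_.revFlow b) ^ m) (pt y))] at this
  rw [← flowSum_pt, ← flowSum_pt]
  exact this.symm

theorem EllipticFlow.revFlow {B c C ε R : ℝ} {N : ℕ} (hb : EllipticFlow V B c C ε N b)
    (hc : 0 < c) (hε : 0 < ε) (hV : ∀ v ∈ V, -v ∈ V) (hR : ∀ v ∈ V, ∀ i, |(v i : ℝ)| ≤ R) :
    EllipticFlow V (B + R) c C (c / C * ε) N (revFlow b) where
  toBalancedFlow := hb.toBalancedFlow.revFlow hV
  le_outflow := by
    rw [hb.outflow_revFlow hV]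
    exact hb.le_outflow
  outflow_le := by
    rw [hb.outflow_revFlow hV]
    exact hb.outflow_le
  tilt i t := by
    obtain ⟨b', hb', hbb'⟩ := hb.tilt i t
    refine ⟨_root_.revFlow b', hb'.revFlow hV, fun x v hv => ?_⟩
    obtain ⟨h1, h2⟩ := hbb' (x + v) (-v) (hV v hv)
    have h3 : |t * v i| ≤ R * |t| := by
      rw [abs_mul, mul_comm]
      exact mul_le_mul_of_nonneg_right (hR v hv i) (abs_nonneg t)
    have h4 := hb.nonneg (x + v) (-v)
    have h5 := abs_le.1 h3
    simp only [Pi.add_apply, Int.cast_add] at h1 h2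
    refine ⟨le_trans (mul_le_mul_of_nonneg_right (Real.exp_le_exp.2 ?_) h4) h1,
      le_trans h2 (mul_le_mul_of_nonneg_right (Real.exp_le_exp.2 ?_) h4)⟩ <;> linarith
  irred x i s hs := by
    obtain ⟨m, hm, h⟩ := hb.irred (x + Pi.single i s) i (-s) (by rwa [abs_neg])
    rw [add_assoc, ← Pi.single_add, add_neg_cancel, Pi.single_zero, add_zero] at h
    refine ⟨m, hm, ?_⟩
    have h1 := hb.outflow_mul_pow_walkOp_revFlow hV (hb.outflow_pos hc) m x (x + Pi.single i s)
    have h2 := hb.le_outflow (x + Pi.single i s)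
    have h3 := hb.outflow_le x
    have h4 := hb.outflow_pos hc x
    have h5 : 0 ≤ (walkOp V (_root_.revFlow b) ^ m) (pt (x + Pi.single i s)) x :=
      (hb.toBalancedFlow.revFlow hV).pow_walkOp_nonneg (pt_nonneg _) m x
    rw [div_mul_eq_mul_div, div_le_iff₀ (by linarith)]
    calc c * ε ≤ outflow V b (x + Pi.single i s) *
          (walkOp V b ^ m) (pt x) (x + Pi.single i s) := by gcongr; linarith
      _ = _ := h1.symm
      _ ≤ _ := by
        rw [mul_comm]
        exact mul_le_mul_of_nonneg_left h3 h5

end Reversal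

section HeatKernel

/-- For `f, g ≥ 0` and events of which at least one holds, `f * g` is bounded by the small multiples
of `f²` and `g²` and by the large multiples restricted to the events. -/
theorem two_mul_le_of_or {f g δ : ℝ} {p q : Prop} (h : p ∨ q) :
    2 * (f * g) ≤ Real.exp (-δ) * f ^ 2 + Real.exp (-δ) * g ^ 2 +
      Real.exp δ * (if p then f ^ 2 else 0) + Real.exp δ * (if q then g ^ 2 else 0) := by
  have key : ∀ a b : ℝ, 2 * (a * b) ≤ Real.exp δ * a ^ 2 + Real.exp (-δ) * b ^ 2 := fun a b => by
    have := two_mul_le_add_sq (Real.exp (δ / 2) * a) (Real.exp (-(δ / 2)) * b)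
    have e1 : Real.exp (δ / 2) ^ 2 = Real.exp δ := by
      rw [← Real.exp_nat_mul]; congr 1; push_cast; ring
    have e2 : Real.exp (-(δ / 2)) ^ 2 = Real.exp (-δ) := by
      rw [← Real.exp_nat_mul]; congr 1; push_cast; ring
    have e3 : Real.exp (δ / 2) * Real.exp (-(δ / 2)) = 1 := by rw [← Real.exp_add]; simp
    rw [mul_pow, mul_pow, e1, e2] at this
    linear_combination this - 2 * a * b * e3
  have hf := key f g
  have hg := key g f
  have p1 : 0 ≤ Real.exp (-δ) * f ^ 2 := by positivity
  have p2 : 0 ≤ Real.exp (-δ) * g ^ 2 := by positivity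
  have p3 : 0 ≤ Real.exp δ * f ^ 2 := by positivity
  have p4 : 0 ≤ Real.exp δ * g ^ 2 := by positivity
  by_cases hp : p <;> by_cases hq : q <;> simp only [hp, hq, if_true, if_false, mul_zero, add_zero]
  · linarith
  · linarith
  · linarith
  · exact (h.elim hp hq).elim

variable {d : ℕ} {V : Finset (Zd d)} {b : Zd d → Zd d → ℝ}

/-- The heat kernel at time `m + k` is controlled by the `L²` masses of the heat kernels of the walk
and of the reversed walk. -/
theorem BalancedFlow.heatKernel_le (hb : BalancedFlow V b) (hV : ∀ v ∈ V, -v ∈ V)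
    (h0 : ∀ x, 0 < outflow V b x) (m k : ℕ) (x y : Zd d) (i : Fin d) {σ ρ : ℝ}
    (hρ : σ * ((x i : ℝ) - y i) = ρ) (δ : ℝ) :
    2 * (outflow V b x * (walkOp V b ^ (m + k)) (pt y) x) ≤
      Real.exp (-δ) * flowSum V (_root_.revFlow b) (((walkOp V (_root_.revFlow b) ^ m) (pt x)) ^ 2) +
      Real.exp (-δ) * flowSum V b (((walkOp V b ^ k) (pt y)) ^ 2) +
      Real.exp δ * halfSpaceMass V (_root_.revFlow b) x i (-σ) (ρ / 2) m +
      Real.exp δ * halfSpaceMass V b y i σ (ρ / 2) k := by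
  set f := (walkOp V (_root_.revFlow b) ^ m) (pt x) with hf
  set g := (walkOp V b ^ k) (pt y) with hg
  have hff : f.support.Finite := finite_support_pow_walkOp (finite_support_pt x) m
  have hgf : g.support.Finite := finite_support_pow_walkOp (finite_support_pt y) k
  have hfg : outflow V b x * (walkOp V b ^ (m + k)) (pt y) x = flowSum V b (f * g) := by
    rw [hf, ← hb.flowSum_mul_pow_walkOp hV h0 (finite_support_pt x) hgf, hg,
      ← pow_add_walkOp_apply, ← flowSum_pt]
    rfl
  simp only [halfSpaceMass, hb.flowSum_revFlow hV, ← hf, ← hg]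
  have hp : (fun z : Zd d => if ρ / 2 ≤ -σ * ((z i : ℝ) - x i) then f z ^ 2 else 0).support.Finite :=
    finite_support_of_zero hff fun z hz => by simp [hz]
  have hq : (fun z : Zd d => if ρ / 2 ≤ σ * ((z i : ℝ) - y i) then g z ^ 2 else 0).support.Finite :=
    finite_support_of_zero hgf fun z hz => by simp [hz]
  have hsmul : ∀ {r : ℝ} {h : Zd d → ℝ}, h.support.Finite → (r • h).support.Finite :=
    fun hh => finite_support_of_zero hh fun z hz => by simp [hz]
  have hadd : ∀ {h h' : Zd d → ℝ}, h.support.Finite → h'.support.Finite →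
      (h + h').support.Finite := fun hh hh' =>
    (hh.union hh').subset (Function.support_add _ _)
  have s1 := hsmul (r := Real.exp (-δ)) (finite_support_sq hff)
  have s2 := hsmul (r := Real.exp (-δ)) (finite_support_sq hgf)
  have s3 := hsmul (r := Real.exp δ) hp
  have s4 := hsmul (r := Real.exp δ) hq
  rw [hfg, ← flowSum_smul, ← flowSum_smul, ← flowSum_smul, ← flowSum_smul, ← flowSum_smul,
    ← flowSum_add s1 s2, ← flowSum_add (hadd s1 s2) s3, ← flowSum_add (hadd (hadd s1 s2) s3) s4]
  refine hb.flowSum_mono (finite_support_of_zero hff fun z hz => by simp [hz])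
    (hadd (hadd (hadd s1 s2) s3) s4) fun z => ?_
  simp only [Pi.add_apply, Pi.smul_apply, Pi.mul_apply, Pi.pow_apply, smul_eq_mul]
  refine two_mul_le_of_or ?_
  by_contra! h
  nlinarith [h.1, h.2]

/-- Gaussian upper bound for the heat kernel of an elliptic flow, in a coordinate direction. -/
theorem exists_heatKernel_le {d : ℕ} (hd : 0 < d) {R B c C ε : ℝ} (hR : 0 ≤ R) (hB : 1 ≤ B)
    (hc : 0 < c) (hC : 0 < C) (hε : 0 < ε) (N : ℕ) :
    ∃ A > 0, ∃ κ > 0, ∀ (V : Finset (Zd d)) (b : Zd d → Zd d → ℝ),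
      (∀ v ∈ V, -v ∈ V) → (∀ v ∈ V, ∀ i, |(v i : ℝ)| ≤ R) → EllipticFlow V B c C ε N b →
      ∀ (n : ℕ), 1 ≤ n → ∀ (x y : Zd d) (i : Fin d),
        (walkOp V b ^ n) (pt y) x ≤
          A * (n : ℝ) ^ (-(d : ℝ) / 2) * Real.exp (-(κ * ((x i : ℝ) - y i) ^ 2 / n)) := by
  obtain ⟨A₁, hA₁, κ₁, hκ₁, hmass⟩ := exists_halfSpaceMass_le hd hR hB hc hC hε N
  obtain ⟨A₂, hA₂, κ₂, hκ₂, hmass'⟩ := exists_halfSpaceMass_le hd hR (B := B + R) (by linarith) hc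
    hC (ε := c / C * ε) (by positivity) N
  set κ := min κ₁ κ₂
  have hκ : 0 < κ := lt_min hκ₁ hκ₂
  set S : ℝ := (1 / 3 : ℝ) ^ (-(d : ℝ) / 2) with hS
  have hS0 : 0 < S := by positivity
  have hAB : 0 < S * (A₁ + A₂) / c := by positivity
  refine ⟨S * (A₁ + A₂) / c + Real.exp (κ / 8 * R ^ 2), by positivity, κ / 8, by positivity, ?_⟩
  intro V b hV hVR hb n hn x y i
  have h0 := hb.outflow_pos hc
  set ρ := |(x i : ℝ) - y i| with hρ
  have hρ0 : 0 ≤ ρ := abs_nonneg _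
  rw [← sq_abs ((x i : ℝ) - y i), ← hρ]
  rcases hn.eq_or_lt with rfl | hn2
  · by_cases hfar : R < ρ
    · rw [pow_walkOp_pt_eq_zero hVR y 1 x i (by simpa using hfar)]
      positivity
    · push Not at hfar
      refine (hb.pow_walkOp_pt_le_one h0 1 x y).trans ?_
      simp only [Nat.cast_one, Real.one_rpow, mul_one, div_one]
      have h1 : κ / 8 * ρ ^ 2 ≤ κ / 8 * R ^ 2 := by gcongr
      calc (1 : ℝ) ≤ Real.exp (κ / 8 * R ^ 2) * Real.exp (-(κ / 8 * ρ ^ 2)) := by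
            rw [← Real.exp_add]
            exact Real.one_le_exp (by linarith)
        _ ≤ _ := by gcongr; linarith
  obtain ⟨σ, hσ, hσρ⟩ : ∃ σ : ℝ, |σ| = 1 ∧ σ * ((x i : ℝ) - y i) = ρ := by
    rcases le_total 0 ((x i : ℝ) - y i) with h | h
    · exact ⟨1, by simp, by rw [hρ, abs_of_nonneg h, one_mul]⟩
    · exact ⟨-1, by simp, by rw [hρ, abs_of_nonpos h, neg_one_mul]⟩
  set m := n / 2 with hm
  set k := n - n / 2 with hk
  have hmk : m + k = n := by omega
  have hn0 : (0 : ℝ) < n := by exact_mod_cast hn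
  set δ := κ * ρ ^ 2 / (8 * n) with hδ
  set φ := (n : ℝ) ^ (-(d : ℝ) / 2) with hφ
  have hφ0 : 0 < φ := by positivity
  have hscale : ∀ j : ℕ, n ≤ 3 * j → (j : ℝ) ^ (-(d : ℝ) / 2) ≤ S * φ := fun j hj => by
    rw [hS, hφ, ← Real.mul_rpow (by norm_num) hn0.le]
    refine rpow_neg_half_antitone d (by positivity) ?_
    have : (n : ℝ) ≤ 3 * j := by exact_mod_cast hj
    linarith
  have hexp : ∀ j : ℕ, 1 ≤ j → j ≤ n → ∀ κ', κ ≤ κ' →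
      2 * δ ≤ κ' * (ρ / 2) ^ 2 / j := fun j hj hjn κ' hκ' => by
    have hj0 : (0 : ℝ) < j := by exact_mod_cast hj
    have hjn' : (j : ℝ) ≤ n := by exact_mod_cast hjn
    calc 2 * δ = κ * (ρ / 2) ^ 2 / n := by rw [hδ]; field_simp; ring
      _ ≤ κ' * (ρ / 2) ^ 2 / j := by
        have : 0 ≤ κ' := hκ.le.trans hκ'
        gcongr
  have hee : Real.exp δ * Real.exp (-(2 * δ)) = Real.exp (-δ) := by
    rw [← Real.exp_add]
    congr 1
    ring
  have bound : ∀ (A' κ' L H : ℝ) (j : ℕ), 0 < A' → κ ≤ κ' → 1 ≤ j → j ≤ n → n ≤ 3 * j →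
      L ≤ A' * (j : ℝ) ^ (-(d : ℝ) / 2) →
      H ≤ A' * (j : ℝ) ^ (-(d : ℝ) / 2) * Real.exp (-(κ' * (ρ / 2) ^ 2 / j)) →
      Real.exp (-δ) * L + Real.exp δ * H ≤ 2 * (A' * S * φ * Real.exp (-δ)) := by
    intro A' κ' L H j hA' hκ' hj hjn hnj hL hH
    have h1 : L ≤ A' * (S * φ) := hL.trans (by gcongr; exact hscale j hnj)
    have h2 : H ≤ A' * (S * φ) * Real.exp (-(2 * δ)) := hH.trans (by
      gcongr
      · exact hscale j hnj
      · exact hexp j hj hjn κ' hκ')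
    calc _ ≤ Real.exp (-δ) * (A' * (S * φ)) +
          Real.exp δ * (A' * (S * φ) * Real.exp (-(2 * δ))) := by gcongr
      _ = Real.exp (-δ) * (A' * (S * φ)) +
          (Real.exp δ * Real.exp (-(2 * δ))) * (A' * (S * φ)) := by ring
      _ = _ := by rw [hee]; ring
  have hb' := hb.revFlow hc hε hV hVR
  obtain ⟨d1, g1⟩ := hmass V b hVR hb y k (by omega)
  obtain ⟨d2, g2⟩ := hmass' V (revFlow b) hVR hb' x m (by omega)
  have e1 := bound A₁ κ₁ _ _ k hA₁ (min_le_left _ _) (by omega) (by omega) (by omega) d1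
    (g1 i σ hσ (ρ / 2) (by positivity))
  have e2 := bound A₂ κ₂ _ _ m hA₂ (min_le_right _ _) (by omega) (by omega) (by omega) d2
    (g2 i (-σ) (by rwa [abs_neg]) (ρ / 2) (by positivity))
  have hmain := hb.heatKernel_le hV h0 m k x y i hσρ δ
  rw [hmk] at hmain
  have hpos : 0 ≤ (walkOp V b ^ n) (pt y) x := hb.pow_walkOp_nonneg (pt_nonneg y) n x
  have hfin : c * (walkOp V b ^ n) (pt y) x ≤ S * (A₁ + A₂) * φ * Real.exp (-δ) :=
    (mul_le_mul_of_nonneg_right (hb.le_outflow x) hpos).trans (by linarith)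
  have hδ' : κ / 8 * ρ ^ 2 / n = δ := by rw [hδ]; field_simp
  rw [hδ']
  calc (walkOp V b ^ n) (pt y) x ≤ S * (A₁ + A₂) * φ * Real.exp (-δ) / c := by
        rw [le_div_iff₀ hc]
        linarith
    _ = S * (A₁ + A₂) / c * φ * Real.exp (-δ) := by ring
    _ ≤ _ := by
      gcongr
      linarith [Real.exp_pos (κ / 8 * R ^ 2)]

end HeatKernel

section Cycles

variable {d K : ℕ} {n : Fin K → ℕ} {z : Fin K → ℕ → Zd d}

/-- The flow in which the translate by `u` of the `i`-th cycle carries the weight `w i u`. -/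
def cycleFlow (n : Fin K → ℕ) (z : Fin K → ℕ → Zd d) (w : Fin K → Zd d → ℝ) (x v : Zd d) : ℝ :=
  ∑ i, ∑ j ∈ Finset.range (n i), if z i (j + 1) - z i j = v then w i (x - z i j) else 0

/-- The jumps of the cycles and their opposites. -/
def symmJumps (n : Fin K → ℕ) (z : Fin K → ℕ → Zd d) : Finset (Zd d) :=
  Lam n z ∪ (Lam n z).image fun v => -v

theorem neg_mem_symmJumps {v : Zd d} (hv : v ∈ symmJumps n z) : -v ∈ symmJumps n z := by
  simp only [symmJumps, Finset.mem_union, Finset.mem_image] at hv ⊢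
  rcases hv with hv | ⟨u, hu, rfl⟩
  · exact Or.inr ⟨v, hv, rfl⟩
  · exact Or.inl (by rwa [neg_neg])

theorem sub_mem_symmJumps {i : Fin K} {j : ℕ} (hj : j ∈ Finset.range (n i)) :
    z i (j + 1) - z i j ∈ symmJumps n z :=
  Finset.mem_union_left _ (Finset.mem_biUnion.2
    ⟨i, Finset.mem_univ i, Finset.mem_image_of_mem (fun j => z i (j + 1) - z i j) hj⟩)

theorem cycleFlow_eq_zero {w : Fin K → Zd d → ℝ} {x v : Zd d} (hv : v ∉ symmJumps n z) :
    cycleFlow n z w x v = 0 :=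
  Finset.sum_eq_zero fun _ _ => Finset.sum_eq_zero fun _ hj =>
    if_neg (ne_of_mem_of_not_mem (sub_mem_symmJumps hj) hv)

theorem sum_symmJumps_ite (F : Fin K → ℕ → Zd d → ℝ) :
    ∑ v ∈ symmJumps n z, ∑ i, ∑ j ∈ Finset.range (n i),
        (if z i (j + 1) - z i j = v then F i j v else 0) =
      ∑ i, ∑ j ∈ Finset.range (n i), F i j (z i (j + 1) - z i j) := by
  rw [Finset.sum_comm]
  refine Finset.sum_congr rfl fun i _ => ?_
  rw [Finset.sum_comm]
  refine Finset.sum_congr rfl fun j hj => ?_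
  rw [Finset.sum_ite_eq, if_pos (sub_mem_symmJumps hj)]

theorem outflow_cycleFlow (w : Fin K → Zd d → ℝ) (x : Zd d) :
    outflow (symmJumps n z) (cycleFlow n z w) x =
      ∑ i, ∑ j ∈ Finset.range (n i), w i (x - z i j) :=
  sum_symmJumps_ite fun i j _ => w i (x - z i j)

theorem balancedFlow_cycleFlow (hcyc : ∀ i, z i (n i) = z i 0) {w : Fin K → Zd d → ℝ}
    (hw : ∀ i u, 0 ≤ w i u) : BalancedFlow (symmJumps n z) (cycleFlow n z w) where
  nonneg x v := Finset.sum_nonneg fun i _ => Finset.sum_nonneg fun j _ => by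
    split_ifs
    · exact hw _ _
    · exact le_rfl
  balanced y := by
    rw [outflow_cycleFlow]
    refine (sum_symmJumps_ite fun i j v => w i (y - v - z i j)).trans ?_
    refine Finset.sum_congr rfl fun i _ => ?_
    have h := (Finset.sum_range_succ (fun j => w i (y - z i j)) (n i)).symm.trans
      (Finset.sum_range_succ' (fun j => w i (y - z i j)) (n i))
    rw [hcyc i] at h
    rw [add_right_cancel h]
    refine Finset.sum_congr rfl fun j _ => ?_
    congr 1
    abel

theorem exists_tilt_cycleFlow (hcyc : ∀ i, z i (n i) = z i 0) {w : Fin K → Zd d → ℝ}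
    (hw : ∀ i u, 0 ≤ w i u) {B : ℝ} (hB : ∀ i, ∀ j < n i, ∀ k, |(z i j k : ℝ)| ≤ B)
    (k : Fin d) (t : ℝ) :
    ∃ b', BalancedFlow (symmJumps n z) b' ∧ ∀ x, ∀ v ∈ symmJumps n z,
      Real.exp (t * x k - B * |t|) * cycleFlow n z w x v ≤ b' x v ∧
        b' x v ≤ Real.exp (t * x k + B * |t|) * cycleFlow n z w x v := by
  refine ⟨cycleFlow n z fun i u => Real.exp (t * u k) * w i u,
    balancedFlow_cycleFlow hcyc fun i u => mul_nonneg (Real.exp_pos _).le (hw i u), ?_⟩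
  intro x v _
  have habs : ∀ i, ∀ j ∈ Finset.range (n i), |t * z i j k| ≤ B * |t| := fun i j hj => by
    rw [abs_mul, mul_comm]
    exact mul_le_mul_of_nonneg_right (hB i j (Finset.mem_range.1 hj) k) (abs_nonneg t)
  simp only [cycleFlow, Finset.mul_sum, mul_ite, mul_zero]
  constructor <;> refine Finset.sum_le_sum fun i _ => Finset.sum_le_sum fun j hj => ?_ <;>
    split_ifs <;> try exact le_rfl
  all_goals
    refine mul_le_mul_of_nonneg_right (Real.exp_le_exp.2 ?_) (hw _ _)
    have := abs_le.1 (habs i j hj)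
    simp only [Pi.sub_apply, Int.cast_sub, mul_sub]
    linarith

theorem exists_abs_coord_le (s : Finset (Zd d)) :
    ∃ R : ℝ, 0 ≤ R ∧ ∀ v ∈ s, ∀ i, |(v i : ℝ)| ≤ R := by
  refine ⟨∑ v ∈ s, ∑ i, |(v i : ℝ)|, by positivity, fun v hv i => ?_⟩
  exact (Finset.single_le_sum (f := fun i => |(v i : ℝ)|) (fun _ _ => abs_nonneg _)
    (Finset.mem_univ i)).trans (Finset.single_le_sum (f := fun v : Zd d => ∑ i, |(v i : ℝ)|)
      (fun _ _ => Finset.sum_nonneg fun _ _ => abs_nonneg _) hv)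

theorem tsum_ite_exists_eq_sum {l : ℕ} {ζ : ℕ → Zd d}
    (hinj : ∀ j k, j < l → k < l → ζ j = ζ k → j = k) (p : ℕ → Prop) [DecidablePred p]
    (f : Zd d → ℝ) :
    ∑' u : Zd d, (if ∃ j < l, ζ j + u = 0 ∧ p j then f u else 0) =
      ∑ j ∈ Finset.range l, if p j then f (-ζ j) else 0 := by
  have hpoint : ∀ u : Zd d, (if ∃ j < l, ζ j + u = 0 ∧ p j then f u else 0) =
      ∑ j ∈ Finset.range l, if u = -ζ j then (if p j then f (-ζ j) else 0) else 0 := fun u => by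
    split_ifs with h
    · obtain ⟨j, hj, hju, hp⟩ := h
      have hu : u = -ζ j := (neg_eq_of_add_eq_zero_right hju).symm
      rw [Finset.sum_eq_single_of_mem j (Finset.mem_range.2 hj), if_pos hu, if_pos hp, hu]
      intro k hk hkj
      refine if_neg fun hku => hkj (hinj k j (Finset.mem_range.1 hk) hj ?_)
      exact neg_injective (hku.symm.trans hu)
    · refine (Finset.sum_eq_zero fun j hj => ?_).symm
      split_ifs with hu hp
      · exact absurd ⟨j, Finset.mem_range.1 hj, by rw [hu, add_neg_cancel], hp⟩ h
      · rfl
      · rfl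
  simp only [hpoint]
  rw [Summable.tsum_finsetSum fun j _ => (hasSum_ite_eq (-ζ j) _).summable]
  exact Finset.sum_congr rfl fun j _ => tsum_ite_eq (-ζ j) _

variable {Ω : Type*} {T : Zd d → Ω → Ω} {W : Fin K → Ω → ℝ}

theorem Mfun_eq_outflow (hinj : ∀ i, ∀ j k, j < n i → k < n i → z i j = z i k → j = k)
    (hT : ∀ x y : Zd d, T (x + y) = T x ∘ T y) (ω : Ω) (x : Zd d) :
    Mfun n z T W (T x ω) =
      outflow (symmJumps n z) (cycleFlow n z fun i u => W i (T u ω)) x := by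
  rw [outflow_cycleFlow, Mfun]
  refine Finset.sum_congr rfl fun i _ => ?_
  have := tsum_ite_exists_eq_sum (hinj i) (fun _ => True) fun u => W i (T u (T x ω))
  simp only [and_true, if_true] at this
  rw [this]
  refine Finset.sum_congr rfl fun j _ => ?_
  rw [sub_eq_neg_add, hT, Function.comp_apply]

theorem Qker_eq_div (hinj : ∀ i, ∀ j k, j < n i → k < n i → z i j = z i k → j = k)
    (hT : ∀ x y : Zd d, T (x + y) = T x ∘ T y) (ω : Ω) (x y : Zd d) :
    Qker n z T W ω x y = cycleFlow n z (fun i u => W i (T u ω)) x (y - x) /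
      outflow (symmJumps n z) (cycleFlow n z fun i u => W i (T u ω)) x := by
  rw [Qker, pfun, Mfun_eq_outflow hinj hT, div_eq_inv_mul, cycleFlow]
  congr 1
  refine Finset.sum_congr rfl fun i _ => ?_
  have hiff : ∀ u : Zd d, (∃ j, 1 ≤ j ∧ j ≤ n i ∧ z i (j - 1) + u = 0 ∧ z i j + u = y - x) ↔
      ∃ j < n i, z i j + u = 0 ∧ z i (j + 1) - z i j = y - x := fun u => by
    constructor
    · rintro ⟨j, h1, hj, h0, hy⟩
      obtain ⟨j, rfl⟩ := Nat.exists_eq_add_of_le' h1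
      rw [Nat.add_sub_cancel] at h0
      refine ⟨j, hj, h0, ?_⟩
      rw [← hy, ← add_sub_add_right_eq_sub _ _ u, h0, sub_zero]
    · rintro ⟨j, hj, h0, hy⟩
      refine ⟨j + 1, by omega, hj, by simpa using h0, ?_⟩
      rw [← hy, ← add_sub_add_right_eq_sub _ _ u, h0, sub_zero]
  refine Eq.trans (tsum_congr fun u => if_congr (hiff u) rfl rfl)
    ((tsum_ite_exists_eq_sum (hinj i) (fun j => z i (j + 1) - z i j = y - x)
      fun u => W i (T u (T x ω))).trans ?_)
  refine Finset.sum_congr rfl fun j _ => ?_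
  rw [sub_eq_neg_add x, hT, Function.comp_apply]

theorem pow_walkOp_eq_tsum {V : Finset (Zd d)} {b : Zd d → Zd d → ℝ} {h : Zd d → ℝ}
    (hh : h.support.Finite) (m : ℕ) (x : Zd d) :
    (walkOp V b ^ m) h x = ∑' u, (walkOp V b ^ m) (pt u) x * h u := by
  have hsum : h = ∑ u ∈ hh.toFinset, h u • pt u := by
    funext x
    simp only [Finset.sum_apply, Pi.smul_apply, smul_eq_mul, pt, mul_ite, mul_one, mul_zero,
      Finset.sum_ite_eq, Set.Finite.mem_toFinset, Function.mem_support]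
    split_ifs with h0
    · rfl
    · exact not_not.1 h0
  rw [tsum_eq_sum (s := hh.toFinset) fun u hu => by
    rw [Set.Finite.mem_toFinset, Function.mem_support, not_not] at hu
    rw [hu, mul_zero]]
  conv_lhs => rw [hsum]
  simp only [map_sum, map_smul, Finset.sum_apply, Pi.smul_apply, smul_eq_mul]
  exact Finset.sum_congr rfl fun u _ => mul_comm _ _

theorem kerpow_eq_pow_walkOp {V : Finset (Zd d)} {b Q : Zd d → Zd d → ℝ}
    (hb : ∀ x, ∀ v ∉ V, b x v = 0) (hQ : ∀ x y, Q x y = b x (y - x) / outflow V b x) (m : ℕ)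
    (x y : Zd d) : kerpow Q m x y = (walkOp V b ^ m) (pt y) x := by
  induction m generalizing y with
  | zero => rfl
  | succ m ih =>
    have hstep : ∀ u, walkOp V b (pt y) u = Q u y := fun u => by
      have hiff : ∀ v, (u + v = y) = (v = y - u) := fun v => propext eq_sub_iff_add_eq'.symm
      rw [walkOp_apply, hQ]
      congr 1
      simp only [pt, hiff, mul_ite, mul_one, mul_zero, Finset.sum_ite_eq']
      split_ifs with h
      · rfl
      · exact (hb u _ h).symm
    rw [pow_add_walkOp_apply m 1, pow_one,
      pow_walkOp_eq_tsum (finite_support_walkOp (finite_support_pt y)), kerpow]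
    exact tsum_congr fun u => by rw [ih, hstep]

theorem eucNorm_single (i : Fin d) {s : ℤ} (hs : |s| = 1) : eucNorm (Pi.single i s : Zd d) = 1 := by
  have hs2 : (s : ℝ) ^ 2 = 1 := by
    rw [← sq_abs, ← Int.cast_abs, hs]
    norm_num
  rw [eucNorm, Finset.sum_eq_single_of_mem i (Finset.mem_univ i), Pi.single_eq_same, hs2,
    Real.sqrt_one]
  intro j _ hj
  rw [Pi.single_eq_of_ne hj]
  norm_num

theorem exists_eucNorm_sq_le (hd : 0 < d) (v : Zd d) :
    ∃ i, eucNorm v ^ 2 ≤ d * (v i : ℝ) ^ 2 := by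
  have : Nonempty (Fin d) := ⟨⟨0, hd⟩⟩
  obtain ⟨i, -, hi⟩ := Finset.exists_max_image Finset.univ (fun i => (v i : ℝ) ^ 2)
    Finset.univ_nonempty
  refine ⟨i, ?_⟩
  rw [eucNorm, Real.sq_sqrt (Finset.sum_nonneg fun _ _ => sq_nonneg _)]
  simpa using Finset.sum_le_card_nsmul Finset.univ (fun i => (v i : ℝ) ^ 2) _ hi

end Cycles

theorem quenched_gaussian_upper_bound
    (d K : ℕ) (hd : 0 < d) (hK : 0 < K) (Ω : Type*)
    (n : Fin K → ℕ) (z : Fin K → ℕ → Zd d)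
    (T : Zd d → Ω → Ω) (W : Fin K → Ω → ℝ) (c C : ℝ)
    (hlen : ∀ i, 0 < n i)
    (hcyc : ∀ i, z i (n i) = z i 0)
    (hinj : ∀ i, ∀ j k, j < n i → k < n i → z i j = z i k → j = k)
    (hT : ∀ x y : Zd d, T (x + y) = T x ∘ T y) (hT0 : T 0 = id)
    (hW : ∀ i ω, 0 ≤ W i ω)
    (hc : 0 < c) (hCfin : c ≤ C)
    (hM : ∀ ω, c ≤ Mfun n z T W ω ∧ Mfun n z T W ω ≤ C)
    (ε : ℝ) (N : ℕ) (hε : 0 < ε)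
    (hirr : ∀ (x : Zd d) (ω : Ω) (e : Zd d), eucNorm e = 1 →
      ∃ m ≤ N, ε ≤ kerpow (Qker n z T W ω) m x (x + e)) :
    ∃ C₀ : ℝ, 0 < C₀ ∧ ∀ (ω : Ω) (m : ℕ), 1 ≤ m → ∀ x y : Zd d,
      kerpow (Qker n z T W ω) m x y
        ≤ C₀ * (m : ℝ) ^ (-(d : ℝ) / 2) * Real.exp (-(eucNorm (y - x) ^ 2) / (C₀ * m)) := by
  obtain ⟨R, hR0, hR⟩ := exists_abs_coord_le (symmJumps n z)
  obtain ⟨B, hB0, hB⟩ := exists_abs_coord_le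
    (Finset.univ.biUnion fun i => (Finset.range (n i)).image (z i))
  have hB' : ∀ i, ∀ j < n i, ∀ k, |(z i j k : ℝ)| ≤ B + 1 := fun i j hj k =>
    (hB _ (Finset.mem_biUnion.2 ⟨i, Finset.mem_univ i,
      Finset.mem_image_of_mem (z i) (Finset.mem_range.2 hj)⟩) k).trans (by linarith)
  have hC : 0 < C := hc.trans_le hCfin
  obtain ⟨A, hA, κ, hκ, hheat⟩ :=
    exists_heatKernel_le hd hR0 (B := B + 1) (by linarith) hc hC hε N
  have hd' : (0 : ℝ) < d := by exact_mod_cast hd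
  have hC₀ : 0 < A + d / κ := by positivity
  refine ⟨A + d / κ, hC₀, fun ω m hm x y => ?_⟩
  have hm' : (0 : ℝ) < m := by exact_mod_cast hm
  have hker := kerpow_eq_pow_walkOp (V := symmJumps n z)
    (b := cycleFlow n z fun i u => W i (T u ω)) (fun _ _ hv => cycleFlow_eq_zero hv)
    (Qker_eq_div (W := W) hinj hT ω)
  have hflow : EllipticFlow (symmJumps n z) (B + 1) c C ε N
      (cycleFlow n z fun i u => W i (T u ω)) :=
    { toBalancedFlow := balancedFlow_cycleFlow hcyc fun i u => hW i _
      le_outflow := fun x => by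
        rw [← Mfun_eq_outflow hinj hT]
        exact (hM _).1
      outflow_le := fun x => by
        rw [← Mfun_eq_outflow hinj hT]
        exact (hM _).2
      tilt := exists_tilt_cycleFlow hcyc (fun i u => hW i _) hB'
      irred := fun x i s hs => by
        obtain ⟨m, hmN, hm⟩ := hirr x ω _ (eucNorm_single i hs)
        exact ⟨m, hmN, by rwa [← hker]⟩ }
  obtain ⟨i, hi⟩ := exists_eucNorm_sq_le hd (y - x)
  rw [hker]
  refine (hheat _ _ (fun _ => neg_mem_symmJumps) hR hflow m hm x y i).trans ?_
  have hsq : ((y - x) i : ℝ) ^ 2 = ((x i : ℝ) - y i) ^ 2 := by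
    rw [Pi.sub_apply]
    push_cast
    ring
  rw [hsq] at hi
  gcongr
  · exact le_add_of_nonneg_right (by positivity)
  · rw [neg_div]
    refine neg_le_neg ?_
    rw [div_le_div_iff₀ (by positivity) hm']
    calc eucNorm (y - x) ^ 2 * m ≤ d * ((x i : ℝ) - y i) ^ 2 * m := by gcongr
      _ = κ * ((x i : ℝ) - y i) ^ 2 * (d / κ * m) := by field_simp
      _ ≤ _ := by
        gcongr
        exact le_add_of_nonneg_left hA.le

end
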